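/- arXiv:math/9905116 — 2 statements merged into one kernel-verified Lean document; each statement's English description precedes it below -/
import Mathlib

section
/- Assume ◊: there exists a sequence (A_α)_{α<ω₁} with A_α ⊆ α for each α, such that for every B ⊆ ω₁ the set {α < ω₁ : B ∩ α = A_α} is stationary in ω₁ (i.e., meets every closed unbounded subset of ω₁). Then there exists a set X ⊆ 2^ω of cardinality ℵ₁ such that every subset of X is a γ-set (in the subspace topology) and X is not strongly meager; indeed there is a measure-zero set G ⊆ 2^ω with X + G = 2^ω. -/
open Set MeasureTheory Filter Pointwise
open scoped ENNReal

/-- The Cantor space `2^ω`: functions `ω → {0,1}` with the product topology and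
coordinatewise addition mod 2 (via `ZMod 2`). -/
abbrev Cantor : Type := ℕ → ZMod 2

/-- `μ` is the product measure on `2^ω` giving each coordinate the uniform measure:
every cylinder prescribing the coordinates in a finite set `s` has measure `2^{-|s|}`.
(This property characterizes the product measure uniquely.) -/
def IsCantorProductMeasure (μ : Measure Cantor) : Prop :=
  ∀ (s : Finset ℕ) (f : ℕ → ZMod 2),
    μ {x : Cantor | ∀ i ∈ s, x i = f i} = (2 : ENNReal)⁻¹ ^ s.card

/-- A family `J` of subsets is an ω-cover of `X` if every finite subset of `X`
is contained in some member of `J`. -/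
def IsOmegaCover {α : Type*} (J : Set (Set α)) (X : Set α) : Prop :=
  ∀ F : Finset α, ↑F ⊆ X → ∃ U ∈ J, ↑F ⊆ U

/-- `X` is a γ-set (equivalently: `X` with the subspace topology is a γ-space):
for every ω-cover `J` of `X` by open subsets of the ambient space there is a sequence
`D n ∈ J` with `X ⊆ ⋃_m ⋂_{n>m} D n`. -/
def IsGammaSet {α : Type*} [TopologicalSpace α] (X : Set α) : Prop :=
  ∀ J : Set (Set α), (∀ U ∈ J, IsOpen U) → IsOmegaCover J X →
    ∃ D : ℕ → Set α, (∀ n, D n ∈ J) ∧ X ⊆ ⋃ m, ⋂ n > m, D n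

/-- The blocks endpoints `k_n = Σ_{i=0}^n 2^i = 2^{n+1} - 1`. -/
def kseq (n : ℕ) : ℕ := 2 ^ (n + 1) - 1

/-- `A_n = {x ∈ 2^ω : x ↾ [k_n, k_{n+1}) = 0}`. -/
def Aset (n : ℕ) : Set Cantor := {x | ∀ i ∈ Set.Ico (kseq n) (kseq (n + 1)), x i = 0}

/-- The null set `G = ⋂_m ⋃_{n>m} A_n`. -/
def Gset : Set Cantor := ⋂ m, ⋃ n > m, Aset n

/-- The rationals: eventually-zero elements of `2^ω`. -/
def Qset : Set Cantor := {z | ∀ᶠ n in atTop, z n = 0}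

/-- `𝒮 = {z ∈ 2^ω : z ↾ [k_n, k_{n+1}) = 1 for infinitely many n}`. -/
def Sset : Set Cantor :=
  {z | ∃ᶠ n in atTop, ∀ i ∈ Set.Ico (kseq n) (kseq (n + 1)), z i = 1}

/-- `[x]* = {z ∈ 𝒮 : z(n) ≤ x(n) for all but finitely many n}`. -/
def starSet (x : Cantor) : Set Cantor :=
  {z ∈ Sset | ∀ᶠ n in atTop, (z n).val ≤ (x n).val}

/-- `𝔭 = 2^{ℵ₀}`: every family of infinite subsets of `ω` of size `< 2^{ℵ₀}` with the
finite intersection property (all finite intersections infinite) has an infinite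
pseudo-intersection. -/
def PseudoIntersectionNumberEqContinuum : Prop :=
  ∀ F : Set (Set ℕ), Cardinal.mk F < 2 ^ Cardinal.aleph0 →
    (∀ A ∈ F, A.Infinite) →
    (∀ G : Finset (Set ℕ), ↑G ⊆ F → (⋂₀ (G : Set (Set ℕ))).Infinite) →
    ∃ A : Set ℕ, A.Infinite ∧ ∀ B ∈ F, (A \ B).Finite

/-- The first uncountable ordinal `ω₁`. -/
noncomputable def omega1 : Ordinal.{0} := (Cardinal.aleph 1).ord

/-- `C` is closed unbounded in `ω₁`: a subset of `ω₁` which is unbounded in `ω₁` and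
contains the supremum of every nonempty bounded subset of itself whose supremum is
below `ω₁`. -/
def IsClubIn (C : Set Ordinal.{0}) : Prop :=
  C ⊆ Set.Iio omega1 ∧ (∀ β < omega1, ∃ γ ∈ C, β < γ) ∧
    ∀ S : Set Ordinal.{0}, S ⊆ C → S.Nonempty → BddAbove S → sSup S < omega1 → sSup S ∈ C

/-- `T` is stationary in `ω₁`: it meets every closed unbounded subset of `ω₁`. -/
def IsStationaryIn (T : Set Ordinal.{0}) : Prop :=
  ∀ C : Set Ordinal.{0}, IsClubIn C → (T ∩ C).Nonempty

/-- Jensen's diamond principle `◊`: there is a sequence `(A_α)_{α<ω₁}` with `A_α ⊆ α`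
such that for every `B ⊆ ω₁` the set `{α < ω₁ : B ∩ α = A_α}` is stationary in `ω₁`. -/
def DiamondPrinciple : Prop :=
  ∃ A : Ordinal.{0} → Set Ordinal.{0}, (∀ α < omega1, A α ⊆ Set.Iio α) ∧
    ∀ B : Set Ordinal.{0}, B ⊆ Set.Iio omega1 →
      IsStationaryIn {α | α < omega1 ∧ B ∩ Set.Iio α = A α}

/-- The binary expansion map `f : 2^ω → [0,1]`, `f(x) = Σ_i x(i)·2^{-(i+1)}`. -/
noncomputable def binmap (x : Cantor) : ℝ := ∑' i : ℕ, ((x i).val : ℝ) / 2 ^ (i + 1)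

/-- `H = ⋂_m ⋃_{n>m} f(A_n)`. -/
noncomputable def Hset : Set ℝ := ⋂ m, ⋃ n > m, binmap '' (Aset n)

/-- The rational numbers as a subset of `ℝ`. -/
def Qreal : Set ℝ := Set.range ((↑) : ℚ → ℝ)


/-- `p` is rich if in every relatively open part of `p`, arbitrarily far out there is a block on
which finitely many points of that part realize all possible patterns. -/
def IsRich (p : Set Cantor) : Prop :=
  ∀ U : Set Cantor, IsOpen U → (p ∩ U).Nonempty → ∀ m : ℕ, ∃ i ≥ m,
    ∃ F : Finset Cantor, ↑F ⊆ p ∩ U ∧ ∀ z : Cantor, ∃ y ∈ F, y + z ∈ Aset i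

/-- The set of points lying in all but finitely many `D n`. -/
def eventualSet {α : Type*} (D : ℕ → Set α) : Set α := ⋃ m, ⋂ n > m, D n

theorem mem_eventualSet {α : Type*} {D : ℕ → Set α} {x : α} :
    x ∈ eventualSet D ↔ ∃ m, ∀ n > m, x ∈ D n := by
  simp [eventualSet]

/-- The set of points agreeing with `x` on the first `n` coordinates. -/
def agreeSet (x : Cantor) (n : ℕ) : Set Cantor := {w | ∀ i < n, w i = x i}

theorem mem_agreeSet_self (x : Cantor) (n : ℕ) : x ∈ agreeSet x n := fun _ _ => rfl

theorem isOpen_agreeSet (x : Cantor) (n : ℕ) : IsOpen (agreeSet x n) := by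
  have : agreeSet x n = ⋂ i ∈ Finset.range n, (fun w : Cantor => w i) ⁻¹' {x i} := by
    ext w; simp [agreeSet]
  rw [this]
  exact isOpen_biInter_finset fun i _ => (isOpen_discrete _).preimage (continuous_apply i)

theorem exists_agreeSet_subset {U : Set Cantor} (hU : IsOpen U) {x : Cantor} (hx : x ∈ U) :
    ∃ n, agreeSet x n ⊆ U := by
  obtain ⟨I, u, h1, h2⟩ := isOpen_pi_iff.1 hU x hx
  refine ⟨I.sup id + 1, fun w hw => h2 ?_⟩
  intro i hi
  have hi' : i < I.sup id + 1 := Nat.lt_succ_of_le (Finset.le_sup (f := id) hi)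
  rw [hw i hi']
  exact (h1 i hi).2

theorem le_kseq (n : ℕ) : n ≤ kseq n := by
  unfold kseq
  have : n + 1 < 2 ^ (n + 1) := Nat.lt_two_pow_self
  omega

theorem add_mem_Aset_of_agree {x w z : Cantor} {i n : ℕ} (hn : kseq (i + 1) ≤ n)
    (hw : w ∈ agreeSet x n) (h : x + z ∈ Aset i) : w + z ∈ Aset i := by
  intro j hj
  have := h j hj
  simp only [Pi.add_apply] at this ⊢
  rwa [hw j (lt_of_lt_of_le hj.2 hn)]

theorem isRich_inter {p C : Set Cantor} (hp : IsRich p) (hC : IsOpen C) : IsRich (p ∩ C) := by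
  intro U hU hne m
  rw [inter_assoc] at hne
  obtain ⟨i, hi, F, hF, h⟩ := hp (C ∩ U) (hC.inter hU) hne m
  exact ⟨i, hi, F, by rwa [inter_assoc], h⟩

theorem isRich_univ : IsRich univ := by
  classical
  intro U hU ⟨x, _, hx⟩ m
  obtain ⟨n, hn⟩ := exists_agreeSet_subset hU hx
  set i := max m n with hi
  refine ⟨i, le_max_left _ _, (Finset.univ : Finset (Finset.range (kseq (i + 1)) → ZMod 2)).image
    (fun w j => if h : kseq i ≤ j ∧ j < kseq (i + 1) then w ⟨j, Finset.mem_range.2 h.2⟩ else x j),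
    ?_, ?_⟩
  · intro y hy
    simp only [Finset.coe_image, Finset.coe_univ, image_univ, mem_range] at hy
    obtain ⟨w, rfl⟩ := hy
    refine ⟨trivial, hn fun j hj => ?_⟩
    have : ¬ (kseq i ≤ j ∧ j < kseq (i + 1)) := by
      have := le_kseq i
      have : n ≤ i := le_max_right _ _
      omega
    simp [this]
  · intro z
    refine ⟨_, Finset.mem_image.2 ⟨fun j => z j, Finset.mem_univ _, rfl⟩, ?_⟩
    intro j hj
    have hj' : kseq i ≤ j ∧ j < kseq (i + 1) := hj
    simp only [Pi.add_apply, hj', and_self, dite_true]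
    exact CharTwo.add_self_eq_zero _

theorem exists_mem_frequently_add_mem_Aset {p : Set Cantor} (hc : IsClosed p) (hne : p.Nonempty)
    (hp : IsRich p) (z : Cantor) : ∃ x ∈ p, ∀ m, ∃ i > m, x + z ∈ Aset i := by
  have : CompactSpace p := isCompact_iff_compactSpace.1 hc.isCompact
  have : Nonempty p := hne.to_subtype
  have hA : ∀ i, IsOpen {x : Cantor | x + z ∈ Aset i} := by
    intro i
    rw [isOpen_iff_mem_nhds]
    intro x hx
    refine Filter.mem_of_superset ((isOpen_agreeSet x (kseq (i + 1))).mem_nhds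
      (mem_agreeSet_self _ _)) fun w hw => add_mem_Aset_of_agree le_rfl hw hx
  have key : Dense (⋂ m, {x : p | ∃ i > m, (x : Cantor) + z ∈ Aset i}) := by
    refine dense_iInter_of_isOpen_nat (fun m => ?_) (fun m => ?_)
    · have : {x : p | ∃ i > m, (x : Cantor) + z ∈ Aset i} =
          ⋃ i > m, Subtype.val ⁻¹' {x : Cantor | x + z ∈ Aset i} := by
        ext; simp
      rw [this]
      exact isOpen_biUnion fun i _ => (hA i).preimage continuous_subtype_val
    · rw [dense_iff_inter_open]
      rintro U hU ⟨x, hx⟩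
      obtain ⟨V, hV, rfl⟩ := isOpen_induced_iff.1 hU
      obtain ⟨i, hi, F, hF, h⟩ := hp V hV ⟨x, x.2, hx⟩ (m + 1)
      obtain ⟨y, hy, hyz⟩ := h z
      exact ⟨⟨y, (hF hy).1⟩, (hF hy).2, i, by omega, hyz⟩
  obtain ⟨x, hx⟩ := key.nonempty
  exact ⟨x, x.2, fun m => by simpa using mem_iInter.1 hx m⟩

theorem countable_isClopen_cantor : {C : Set Cantor | IsClopen C}.Countable := by
  have : Countable (TopologicalSpace.Clopens Cantor) :=
    TopologicalSpace.Clopens.countable_iff_secondCountable.2 inferInstance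
  refine (countable_range (fun C : TopologicalSpace.Clopens Cantor => (C : Set Cantor))).mono ?_
  intro C hC
  exact ⟨⟨C, hC⟩, rfl⟩

theorem exists_isClopen_finite_subset {U F : Set Cantor} (hU : IsOpen U) (hF : F.Finite)
    (h : F ⊆ U) : ∃ C, IsClopen C ∧ F ⊆ C ∧ C ⊆ U :=
  exists_clopen_of_closed_subset_open hF.isClosed hU h

/-- A family of nonempty closed rich sets that is dense under inclusion, in the sense that each
nonempty relatively open part of a member contains a member. -/
structure IsRichFamily (ℱ : Set (Set Cantor)) : Prop where
  isClosed : ∀ p ∈ ℱ, IsClosed p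
  nonempty : ∀ p ∈ ℱ, p.Nonempty
  isRich : ∀ p ∈ ℱ, IsRich p
  exists_subset : ∀ p ∈ ℱ, ∀ U, IsOpen U → (p ∩ U).Nonempty → ∃ q ∈ ℱ, q ⊆ p ∩ U

/-- `S` is a finite refinement of `P` by sets of small diameter contained in `W`, realizing all
patterns on some block beyond `n`. -/
structure IsRefinement (ℱ : Set (Set Cantor)) (W : Set Cantor) (n : ℕ) (P : Set Cantor)
    (S : Finset (Set Cantor)) : Prop where
  mem : ∀ Q ∈ S, Q ∈ ℱ
  subset : ∀ Q ∈ S, Q ⊆ P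
  subset_target : ∀ Q ∈ S, Q ⊆ W
  agree : ∀ Q ∈ S, ∀ x ∈ Q, ∀ y ∈ Q, y ∈ agreeSet x n
  exists_block : ∃ i ≥ n, ∀ z, ∃ Q ∈ S, ∀ y ∈ Q, y + z ∈ Aset i

theorem IsRichFamily.exists_isRefinement {ℱ : Set (Set Cantor)} (hℱ : IsRichFamily ℱ)
    {W : Set Cantor} (hW : ∀ p ∈ ℱ, ∃ q ∈ ℱ, q ⊆ p ∩ W) (n : ℕ) {P : Set Cantor} (hP : P ∈ ℱ) :
    ∃ S, IsRefinement ℱ W n P S := by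
  classical
  obtain ⟨i, hi, F, hF, hz⟩ := hℱ.isRich P hP univ isOpen_univ
    (by simpa using hℱ.nonempty P hP) n
  have h1 : ∀ y : Cantor, ∃ Q, y ∈ F → Q ∈ ℱ ∧ Q ⊆ P ∧ Q ⊆ W ∧
      Q ⊆ agreeSet y (n + kseq (i + 1)) := by
    intro y
    by_cases hy : y ∈ F
    · obtain ⟨q, hq, hqs⟩ := hℱ.exists_subset P hP _ (isOpen_agreeSet y (n + kseq (i + 1)))
        ⟨y, (hF hy).1, mem_agreeSet_self _ _⟩
      obtain ⟨r, hr, hrs⟩ := hW q hq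
      rw [subset_inter_iff] at hqs hrs
      exact ⟨r, fun _ => ⟨hr, hrs.1.trans hqs.1, hrs.2, hrs.1.trans hqs.2⟩⟩
    · exact ⟨∅, fun h => absurd h hy⟩
  choose Q hQ using h1
  refine ⟨F.image Q, ?_, ?_, ?_, ?_, i, hi, ?_⟩
  · simp only [Finset.mem_image]; rintro _ ⟨y, hy, rfl⟩; exact (hQ y hy).1
  · simp only [Finset.mem_image]; rintro _ ⟨y, hy, rfl⟩; exact (hQ y hy).2.1
  · simp only [Finset.mem_image]; rintro _ ⟨y, hy, rfl⟩; exact (hQ y hy).2.2.1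
  · simp only [Finset.mem_image]
    rintro _ ⟨y, hy, rfl⟩ x hx w hw j hj
    rw [(hQ y hy).2.2.2 hx j (by omega), (hQ y hy).2.2.2 hw j (by omega)]
  · intro z
    obtain ⟨y, hy, hyz⟩ := hz z
    exact ⟨Q y, Finset.mem_image_of_mem _ hy, fun w hw =>
      add_mem_Aset_of_agree (by omega) ((hQ y hy).2.2.2 hw) hyz⟩

theorem IsRichFamily.exists_isRefinement_subset_cover {ℱ : Set (Set Cantor)}
    (hℱ : IsRichFamily ℱ) {W : Set Cantor} (hW : ∀ p ∈ ℱ, ∃ q ∈ ℱ, q ⊆ p ∩ W)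
    {J : Set (Set Cantor)} {Y : Set Cantor} (hJo : ∀ U ∈ J, IsOpen U) (hJ : IsOmegaCover J Y)
    (n : ℕ) {F : Finset Cantor} (hF : ↑F ⊆ Y) (Ψ : Finset (Set Cantor)) :
    ∃ D ∈ J, ↑F ⊆ D ∧ ∃ S : Set Cantor → Finset (Set Cantor), ∀ P ∈ ℱ,
      IsRefinement ℱ W n P (S P) ∧ (P ∈ Ψ → ∀ Q ∈ S P, Q ∩ Y = ∅ ∨ Q ⊆ D) := by
  classical
  have h1 : ∀ P : Set Cantor, ∃ y, (P ∩ Y).Nonempty → y ∈ P ∩ Y := fun P => by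
    by_cases h : (P ∩ Y).Nonempty
    · exact ⟨h.some, fun _ => h.some_mem⟩
    · exact ⟨0, fun h' => absurd h' h⟩
  choose y hy using h1
  obtain ⟨D, hD, hFD⟩ := hJ (F ∪ (Ψ.filter fun P => (P ∩ Y).Nonempty).image y) (by
    intro w hw
    simp only [Finset.coe_union, Finset.coe_image, Finset.coe_filter, mem_union, mem_image,
      mem_ofPred_eq] at hw
    rcases hw with hw | ⟨P, hP, rfl⟩
    · exact hF hw
    · exact (hy P hP.2).2)
  refine ⟨D, hD, fun w hw => hFD (by simp_all), ?_⟩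
  have h2 : ∀ P : Set Cantor, ∃ S, P ∈ ℱ →
      IsRefinement ℱ W n P S ∧ (P ∈ Ψ → ∀ Q ∈ S, Q ∩ Y = ∅ ∨ Q ⊆ D) := by
    intro P
    by_cases hP : P ∈ ℱ
    swap
    · exact ⟨∅, fun h => absurd h hP⟩
    obtain ⟨P', hP', hP'P, hP'D⟩ : ∃ P' ∈ ℱ, P' ⊆ P ∧ (P ∈ Ψ → P' ∩ Y = ∅ ∨ P' ⊆ D) := by
      by_cases hPΨ : P ∈ Ψ ∧ (P ∩ Y).Nonempty
      · have hyD : y P ∈ D := hFD (by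
          simp only [Finset.coe_union, Finset.coe_image, Finset.coe_filter, mem_union, mem_image]
          exact Or.inr ⟨P, hPΨ, rfl⟩)
        obtain ⟨q, hq, hqs⟩ := hℱ.exists_subset P hP D (hJo D hD) ⟨y P, (hy P hPΨ.2).1, hyD⟩
        exact ⟨q, hq, hqs.trans inter_subset_left, fun _ => Or.inr (hqs.trans inter_subset_right)⟩
      · refine ⟨P, hP, subset_rfl, fun h => Or.inl ?_⟩
        rw [← not_nonempty_iff_eq_empty]
        exact fun h' => hPΨ ⟨h, h'⟩
    obtain ⟨S, hS⟩ := hℱ.exists_isRefinement hW n hP'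
    refine ⟨S, fun _ => ⟨⟨hS.mem, fun Q hQ => (hS.subset Q hQ).trans hP'P, hS.subset_target,
      hS.agree, hS.exists_block⟩, fun hPΨ Q hQ => ?_⟩⟩
    rcases hP'D hPΨ with h | h
    · refine Or.inl (subset_empty_iff.1 ?_)
      rw [← h]
      exact inter_subset_inter_left _ (hS.subset Q hQ)
    · exact Or.inr ((hS.subset Q hQ).trans h)
  choose S hS using h2
  exact ⟨S, hS⟩

open Classical in
/-- Stages of a fusion: start from `{P}` and repeatedly replace each member by its refinement. -/
noncomputable def fusionStage (S : ℕ → Set Cantor → Finset (Set Cantor)) (P : Set Cantor) :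
    ℕ → Finset (Set Cantor)
  | 0 => {P}
  | n + 1 => (fusionStage S P n).biUnion (S n)

/-- The fusion of the refinements `S` started from `P`. -/
def fusion (S : ℕ → Set Cantor → Finset (Set Cantor)) (P : Set Cantor) : Set Cantor :=
  ⋂ n, ⋃ Q ∈ fusionStage S P n, Q

section Fusion

variable {ℱ : Set (Set Cantor)} {W : ℕ → Set Cantor}
  {S : ℕ → Set Cantor → Finset (Set Cantor)} {P : Set Cantor}

theorem mem_fusionStage_succ {n : ℕ} {Q : Set Cantor} :
    Q ∈ fusionStage S P (n + 1) ↔ ∃ R ∈ fusionStage S P n, Q ∈ S n R := by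
  classical
  simp [fusionStage]

theorem mem_fusion {x : Cantor} :
    x ∈ fusion S P ↔ ∀ n, ∃ Q ∈ fusionStage S P n, x ∈ Q := by
  simp [fusion]

theorem fusion_subset : fusion S P ⊆ P := by
  intro x hx
  obtain ⟨Q, hQ, hxQ⟩ := mem_fusion.1 hx 0
  rw [fusionStage, Finset.mem_singleton] at hQ
  exact hQ ▸ hxQ

theorem mem_of_mem_fusionStage (hS : ∀ n, ∀ Q ∈ ℱ, IsRefinement ℱ (W n) n Q (S n Q))
    (hP : P ∈ ℱ) (n : ℕ) : ∀ Q ∈ fusionStage S P n, Q ∈ ℱ := by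
  induction n with
  | zero => intro Q hQ; rw [fusionStage, Finset.mem_singleton] at hQ; exact hQ ▸ hP
  | succ n ih =>
    intro Q hQ
    obtain ⟨R, hR, hQR⟩ := mem_fusionStage_succ.1 hQ
    exact (hS n R (ih R hR)).mem Q hQR

theorem isClosed_fusion (hc : ∀ p ∈ ℱ, IsClosed p)
    (hS : ∀ n, ∀ Q ∈ ℱ, IsRefinement ℱ (W n) n Q (S n Q)) (hP : P ∈ ℱ) :
    IsClosed (fusion S P) :=
  isClosed_iInter fun n => (Finset.finite_toSet _).isClosed_biUnion fun Q hQ =>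
    hc Q (mem_of_mem_fusionStage hS hP n Q hQ)

theorem exists_parent_of_le (hS : ∀ n, ∀ Q ∈ ℱ, IsRefinement ℱ (W n) n Q (S n Q))
    (hP : P ∈ ℱ) {x : Cantor} {m n : ℕ} (hmn : m ≤ n)
    (h : ∃ Q ∈ fusionStage S P n, x ∈ Q) : ∃ Q ∈ fusionStage S P m, x ∈ Q := by
  induction n, hmn using Nat.le_induction with
  | base => exact h
  | succ n hn ih =>
    obtain ⟨Q, hQ, hx⟩ := h
    obtain ⟨R, hR, hQR⟩ := mem_fusionStage_succ.1 hQ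
    exact ih ⟨R, hR, (hS n R (mem_of_mem_fusionStage hS hP n R hR)).subset Q hQR hx⟩

theorem nonempty_inter_fusion (hℱ : IsRichFamily ℱ)
    (hS : ∀ n, ∀ Q ∈ ℱ, IsRefinement ℱ (W n) n Q (S n Q)) (hP : P ∈ ℱ) {n : ℕ}
    {Q : Set Cantor} (hQ : Q ∈ fusionStage S P n) : (Q ∩ fusion S P).Nonempty := by
  have hch : ∀ (m : ℕ) (R : {R // R ∈ fusionStage S P (n + m)}),
      ∃ R' : {R // R ∈ fusionStage S P (n + (m + 1))}, (R' : Set Cantor) ⊆ R := by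
    rintro m ⟨R, hR⟩
    have h := hS (n + m) R (mem_of_mem_fusionStage hS hP _ R hR)
    obtain ⟨i, -, hi⟩ := h.exists_block
    obtain ⟨R', hR', -⟩ := hi 0
    exact ⟨⟨R', mem_fusionStage_succ.2 ⟨R, hR, hR'⟩⟩, h.subset R' hR'⟩
  choose c hc using hch
  let t : (m : ℕ) → {R // R ∈ fusionStage S P (n + m)} :=
    fun m => Nat.rec ⟨Q, hQ⟩ (fun m R => c m R) m
  have htm : ∀ m, (t m).1 ∈ ℱ :=
    fun m => mem_of_mem_fusionStage hS hP (n + m) (t m).1 (t m).2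
  obtain ⟨x, hx⟩ := IsCompact.nonempty_iInter_of_sequence_nonempty_isCompact_isClosed
    (fun m => (t m).1) (fun m => hc m (t m)) (fun m => hℱ.nonempty _ (htm m))
    (hℱ.isClosed _ (htm 0)).isCompact (fun m => hℱ.isClosed _ (htm m))
  rw [mem_iInter] at hx
  refine ⟨x, hx 0, mem_fusion.2 fun k => ?_⟩
  have hxk : x ∈ (t k).1 := hx k
  exact exists_parent_of_le hS hP (Nat.le_add_left k n) ⟨(t k).1, (t k).2, hxk⟩

theorem fusion_nonempty (hℱ : IsRichFamily ℱ)
    (hS : ∀ n, ∀ Q ∈ ℱ, IsRefinement ℱ (W n) n Q (S n Q)) (hP : P ∈ ℱ) :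
    (fusion S P).Nonempty :=
  (nonempty_inter_fusion hℱ hS hP (n := 0) (Q := P) (by simp [fusionStage])).mono
    inter_subset_right

theorem fusion_subset_target (hS : ∀ n, ∀ Q ∈ ℱ, IsRefinement ℱ (W n) n Q (S n Q))
    (hP : P ∈ ℱ) (n : ℕ) : fusion S P ⊆ W n := by
  intro x hx
  obtain ⟨Q, hQ, hxQ⟩ := mem_fusion.1 hx (n + 1)
  obtain ⟨R, hR, hQR⟩ := mem_fusionStage_succ.1 hQ
  exact (hS n R (mem_of_mem_fusionStage hS hP n R hR)).subset_target Q hQR hxQ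

theorem isRich_fusion (hℱ : IsRichFamily ℱ)
    (hS : ∀ n, ∀ Q ∈ ℱ, IsRefinement ℱ (W n) n Q (S n Q)) (hP : P ∈ ℱ) :
    IsRich (fusion S P) := by
  classical
  rintro U hU ⟨x, hx, hxU⟩ m
  obtain ⟨N, hN⟩ := exists_agreeSet_subset hU hxU
  set n := max m N with hn
  obtain ⟨Q, hQ, hxQ⟩ := mem_fusion.1 hx (n + 1)
  have hQU : Q ⊆ U := by
    intro w hw
    obtain ⟨R, hR, hQR⟩ := mem_fusionStage_succ.1 hQ
    have := (hS n R (mem_of_mem_fusionStage hS hP n R hR)).agree Q hQR x hxQ w hw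
    exact hN fun j hj => this j (lt_of_lt_of_le hj (le_max_right _ _))
  have hr := hS (n + 1) Q (mem_of_mem_fusionStage hS hP _ Q hQ)
  obtain ⟨i, hi, hz⟩ := hr.exists_block
  have hne : ∀ R : Set Cantor, ∃ y, R ∈ S (n + 1) Q → y ∈ R ∩ fusion S P := by
    intro R
    by_cases hR : R ∈ S (n + 1) Q
    · obtain ⟨y, hy⟩ := nonempty_inter_fusion hℱ hS hP (mem_fusionStage_succ.2 ⟨Q, hQ, hR⟩)
      exact ⟨y, fun _ => hy⟩
    · exact ⟨0, fun h => absurd h hR⟩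
  choose y hy using hne
  refine ⟨i, ?_, (S (n + 1) Q).image y, ?_, ?_⟩
  · have : m ≤ n := le_max_left _ _
    omega
  · intro w hw
    simp only [Finset.coe_image, mem_image, Finset.mem_coe] at hw
    obtain ⟨R, hR, rfl⟩ := hw
    exact ⟨(hy R hR).2, hQU (hr.subset R hR (hy R hR).1)⟩
  · intro z
    obtain ⟨R, hR, hRz⟩ := hz z
    exact ⟨y R, Finset.mem_image_of_mem _ hR, hRz _ (hy R hR).1⟩

end Fusion

/-- A countable rich family `𝒯` densely refining `ℱ`, contained in the targets `W n`, whose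
members are eventually covered by one sequence from the ω-cover `J`, apart from points lying in
members of `ℱ` that miss `Y`. -/
theorem IsRichFamily.exists_fusion {ℱ : Set (Set Cantor)} (hℱ : IsRichFamily ℱ)
    (hcount : ℱ.Countable) {W : ℕ → Set Cantor}
    (hW : ∀ n, ∀ p ∈ ℱ, ∃ q ∈ ℱ, q ⊆ p ∩ W n) {J : Set (Set Cantor)} {Y : Set Cantor}
    (hY : Y.Countable) (hJo : ∀ U ∈ J, IsOpen U) (hJ : IsOmegaCover J Y) :
    ∃ 𝒯 : Set (Set Cantor), 𝒯.Countable ∧ IsRichFamily 𝒯 ∧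
      (∀ p ∈ ℱ, ∀ U, IsOpen U → (p ∩ U).Nonempty → ∃ q ∈ 𝒯, q ⊆ p ∩ U) ∧
      (∀ q ∈ 𝒯, ∀ n, q ⊆ W n) ∧
      ∃ D : ℕ → Set Cantor, (∀ n, D n ∈ J) ∧ Y ⊆ eventualSet D ∧
        ∀ q ∈ 𝒯, ∀ x ∈ q, x ∈ eventualSet D ∨ ∃ Q ∈ ℱ, x ∈ Q ∧ Q ∩ Y = ∅ := by
  classical
  obtain ⟨e, he⟩ := countable_iff_exists_subset_range.1 hcount
  obtain ⟨f, hf⟩ := countable_iff_exists_subset_range.1 hY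
  let F : ℕ → Finset Cantor := fun n => ((Finset.range (n + 1)).image f).filter (· ∈ Y)
  have hF : ∀ n, ↑(F n) ⊆ Y := fun n w hw => (Finset.mem_filter.1 hw).2
  choose D hDJ hFD S hS using fun n Ψ =>
    hℱ.exists_isRefinement_subset_cover (hW n) hJo hJ n (hF n) Ψ
  let Φ : ℕ → ℕ → Finset (Set Cantor) := fun n => Nat.rec (fun j => {e j})
    (fun n Φn j => (Φn j).biUnion (S n ((Finset.range (n + 1)).biUnion Φn))) n
  let Ψ : ℕ → Finset (Set Cantor) := fun n => (Finset.range (n + 1)).biUnion (Φ n)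
  let S' : ℕ → Set Cantor → Finset (Set Cantor) := fun n => S n (Ψ n)
  have hΦ : ∀ n j, Φ n j = fusionStage S' (e j) n := by
    intro n
    induction n with
    | zero => intro j; rfl
    | succ n ih =>
      intro j
      have h1 : Φ (n + 1) j = (Φ n j).biUnion (S' n) := rfl
      rw [h1, ih, fusionStage]
  have hS' : ∀ n, ∀ Q ∈ ℱ, IsRefinement ℱ (W n) n Q (S' n Q) := fun n Q hQ =>
    (hS n (Ψ n) Q hQ).1
  let D' : ℕ → Set Cantor := fun n => D n (Ψ n)
  refine ⟨{q | ∃ j, ∃ C, IsClopen C ∧ e j ∈ ℱ ∧ q = fusion S' (e j) ∩ C ∧ q.Nonempty},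
    ?_, ⟨?_, ?_, ?_, ?_⟩, ?_, ?_, D', fun n => hDJ _ _, ?_, ?_⟩
  · have : Countable {C : Set Cantor | IsClopen C} := countable_isClopen_cantor.to_subtype
    refine (countable_range
      (fun a : ℕ × {C : Set Cantor | IsClopen C} => fusion S' (e a.1) ∩ a.2)).mono ?_
    rintro q ⟨j, C, hC, -, rfl, -⟩
    exact ⟨(j, ⟨C, hC⟩), rfl⟩
  · rintro _ ⟨j, C, hC, hj, rfl, -⟩
    exact (isClosed_fusion hℱ.isClosed hS' hj).inter hC.isClosed
  · rintro _ ⟨j, C, hC, hj, rfl, hne⟩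
    exact hne
  · rintro _ ⟨j, C, hC, hj, rfl, -⟩
    exact isRich_inter (isRich_fusion hℱ hS' hj) hC.isOpen
  · rintro _ ⟨j, C, hC, hj, rfl, -⟩ U hU ⟨x, ⟨hx, hxC⟩, hxU⟩
    obtain ⟨K, hK, hxK, hKU⟩ := exists_isClopen_finite_subset hU (finite_singleton x)
      (singleton_subset_iff.2 hxU)
    have hxK := singleton_subset_iff.1 hxK
    exact ⟨_, ⟨j, C ∩ K, hC.inter hK, hj, rfl, x, hx, hxC, hxK⟩,
      fun w hw => ⟨⟨hw.1, hw.2.1⟩, hKU hw.2.2⟩⟩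
  · intro p hp U hU hne
    obtain ⟨q, hq, hqs⟩ := hℱ.exists_subset p hp U hU hne
    obtain ⟨j, rfl⟩ := he hq
    exact ⟨_, ⟨j, univ, isClopen_univ, hq, (inter_univ _).symm, fusion_nonempty hℱ hS' hq⟩,
      fusion_subset.trans hqs⟩
  · rintro _ ⟨j, C, hC, hj, rfl, -⟩ n
    exact inter_subset_left.trans (fusion_subset_target hS' hj n)
  · intro y hy
    obtain ⟨k, rfl⟩ := hf hy
    refine mem_eventualSet.2 ⟨k, fun n hn => hFD n (Ψ n) ?_⟩
    simp only [F, Finset.coe_filter, mem_ofPred_eq, Finset.mem_image, Finset.mem_range]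
    exact ⟨⟨k, by omega, rfl⟩, hy⟩
  · rintro _ ⟨j, C, hC, hj, rfl, -⟩ x ⟨hx, -⟩
    by_cases hdead : ∃ Q ∈ ℱ, x ∈ Q ∧ Q ∩ Y = ∅
    · exact Or.inr hdead
    refine Or.inl (mem_eventualSet.2 ⟨j, fun n hn => ?_⟩)
    obtain ⟨Q, hQ, hxQ⟩ := mem_fusion.1 hx (n + 1)
    obtain ⟨R, hR, hQR⟩ := mem_fusionStage_succ.1 hQ
    have hRℱ := mem_of_mem_fusionStage hS' hj n R hR
    have hRΨ : R ∈ Ψ n := Finset.mem_biUnion.2 ⟨j, Finset.mem_range.2 (by omega), by rwa [hΦ]⟩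
    rcases (hS n (Ψ n) R hRℱ).2 hRΨ Q hQR with h | h
    · exact absurd ⟨Q, (hS' n R hRℱ).mem Q hQR, hxQ, h⟩ hdead
    · exact h hxQ

theorem mem_Gset {x : Cantor} : x ∈ Gset ↔ ∀ m, ∃ n > m, x ∈ Aset n := by
  simp [Gset]

theorem measure_Gset_eq_zero {μ : Measure Cantor} (hμ : IsCantorProductMeasure μ) :
    μ Gset = 0 := by
  have hA : ∀ n, μ {x | x ∈ Aset n} ≤ (2 : ENNReal)⁻¹ ^ n := by
    intro n
    have h1 : {x : Cantor | x ∈ Aset n} =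
        {x : Cantor | ∀ i ∈ Finset.Ico (kseq n) (kseq (n + 1)), x i = (0 : Cantor) i} := by
      ext x; simp [Aset]
    rw [h1, hμ]
    refine pow_le_pow_right_of_le_one' (by simp) ?_
    rw [Nat.card_Ico]
    have h2 : n < 2 ^ n := Nat.lt_two_pow_self
    simp only [kseq, pow_succ]
    omega
  refine measure_mono_null (fun x hx => ?_)
    (measure_setOfPred_frequently_eq_zero (p := fun n x => x ∈ Aset n) (μ := μ) (ne_of_lt ?_))
  · rw [mem_Gset] at hx
    refine Filter.frequently_atTop.2 fun m => ?_
    obtain ⟨n, hn, h⟩ := hx m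
    exact ⟨n, hn.le, h⟩
  · refine lt_of_le_of_lt (ENNReal.tsum_le_tsum hA) ?_
    rw [ENNReal.tsum_geometric]
    simp

theorem add_Gset_ne_univ_of_countable {X : Set Cantor} (hX : X.Countable) : X + Gset ≠ univ := by
  intro h
  obtain ⟨x, hx⟩ := countable_iff_exists_subset_range.1 hX
  let z : Cantor := fun i => x (i + 1 - 2 ^ Nat.log 2 (i + 1)) i + 1
  obtain ⟨y, hy, g, hg, hz⟩ := mem_add.1 (h ▸ mem_univ z)
  obtain ⟨j, rfl⟩ := hx hy
  obtain ⟨n, hn, hgn⟩ := mem_Gset.1 hg j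
  have h1 : j < 2 ^ (n + 1) :=
    (show j < n + 1 by omega).trans Nat.lt_two_pow_self
  have h2 : kseq n + j + 1 = 2 ^ (n + 1) + j := by
    have : 0 < 2 ^ (n + 1) := by positivity
    unfold kseq
    omega
  have h3 : Nat.log 2 (kseq n + j + 1) = n + 1 := by
    rw [h2, Nat.log_eq_iff (by simp)]
    rw [pow_succ 2 (n + 1)]
    omega
  have h4 : g (kseq n + j) = 0 := by
    refine hgn _ ⟨by omega, ?_⟩
    have : kseq (n + 1) = 2 * 2 ^ (n + 1) - 1 := by rw [kseq, pow_succ 2 (n + 1), mul_comm]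
    omega
  have h5 := congrFun hz (kseq n + j)
  rw [h2] at h3
  simp only [Pi.add_apply, h4, z, add_zero, h2, h3, Nat.add_sub_cancel_left] at h5
  exact one_ne_zero (left_eq_add.1 h5)

theorem omega1_eq : omega1 = Ordinal.omega 1 := Cardinal.ord_aleph 1

theorem iSup_nat_lt_omega1 {a : ℕ → Ordinal.{0}} (h : ∀ n, a n < omega1) :
    ⨆ n, a n < omega1 := by
  rw [omega1_eq] at *
  exact Ordinal.iSup_lt_omega_one h

theorem lift_mk_Iio_omega1 :
    Cardinal.mk (Iio omega1) = Cardinal.lift.{1} (Cardinal.aleph.{0} 1) := by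
  rw [Cardinal.mk_Iio_ordinal, omega1, Cardinal.card_ord]

theorem omega0_lt_omega1 : Ordinal.omega0 < omega1 := by
  rw [omega1_eq]; exact Ordinal.omega0_lt_omega_one

theorem omega0_add_lt_omega1 {β : Ordinal} (h : β < omega1) : Ordinal.omega0 + β < omega1 := by
  have := omega0_lt_omega1
  rw [omega1_eq] at *
  exact Ordinal.isPrincipal_add_omega 1 this h

theorem countable_Iio_of_lt_omega1 {α : Ordinal.{0}} (h : α < omega1) : (Iio α).Countable := by
  rw [← Cardinal.le_aleph0_iff_set_countable, Cardinal.mk_Iio_ordinal, Cardinal.lift_le_aleph0]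
  have h1 : α.card < Cardinal.aleph 1 := Cardinal.lt_ord.1 h
  rw [← Cardinal.succ_aleph0] at h1
  exact Order.lt_succ_iff.1 h1

theorem exists_lt_omega1_bound {s : Set Ordinal.{0}} (hs : s.Countable)
    (h : ∀ β ∈ s, β < omega1) : ∃ γ < omega1, ∀ β ∈ s, β < γ := by
  classical
  obtain ⟨f, hf⟩ := countable_iff_exists_subset_range.1 hs
  have hlim : ∀ β < omega1, Order.succ β < omega1 := fun β hβ => by
    rw [omega1_eq] at *
    exact (Cardinal.isSuccLimit_omega 1).succ_lt hβ
  refine ⟨⨆ n, if f n < omega1 then Order.succ (f n) else 0, iSup_nat_lt_omega1 fun n => ?_, ?_⟩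
  · split_ifs with hn
    · exact hlim _ hn
    · exact (Ordinal.omega0_pos).trans omega0_lt_omega1
  · intro β hβ
    obtain ⟨n, rfl⟩ := hf hβ
    refine lt_of_lt_of_le (Order.lt_succ (f n)) ?_
    have := Ordinal.le_iSup (fun n => if f n < omega1 then Order.succ (f n) else 0) n
    simpa [h _ hβ] using this

theorem isClubIn_closurePoints {g : Ordinal.{0} → Ordinal.{0}}
    (hg : ∀ β < omega1, g β < omega1) :
    IsClubIn {α | α < omega1 ∧ 0 < α ∧ ∀ β < α, g β < α} := by
  refine ⟨fun α hα => hα.1, ?_, ?_⟩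
  · intro β₀ hβ₀
    have hb : ∀ δ, ∃ γ, δ < omega1 → γ < omega1 ∧ δ < γ ∧ ∀ ε ≤ δ, g ε < γ := by
      intro δ
      by_cases hδ : δ < omega1
      · have hc : (Iic δ).Countable := by
          rw [← Iio_insert]
          exact (countable_Iio_of_lt_omega1 hδ).insert δ
        obtain ⟨γ, hγ, h⟩ := exists_lt_omega1_bound ((hc.image g).insert δ) (by
          rintro β (rfl | ⟨ε, hε, rfl⟩)
          · exact hδ
          · exact hg ε (lt_of_le_of_lt hε hδ))
        exact ⟨γ, fun _ => ⟨hγ, h δ (mem_insert _ _), fun ε hε =>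
          h _ (mem_insert_of_mem _ ⟨ε, hε, rfl⟩)⟩⟩
      · exact ⟨0, fun h => absurd h hδ⟩
    choose b hb using hb
    let a : ℕ → Ordinal.{0} := fun n => b^[n] β₀
    have ha_succ : ∀ n, a (n + 1) = b (a n) := fun n => Function.iterate_succ_apply' b n β₀
    have ha : ∀ n, a n < omega1 := by
      intro n
      induction n with
      | zero => exact hβ₀
      | succ n ih => rw [ha_succ]; exact (hb _ ih).1
    have hle : ∀ n, a n ≤ ⨆ n, a n := Ordinal.le_iSup a
    have hlt : β₀ < ⨆ n, a n :=
      lt_of_lt_of_le (ha_succ 0 ▸ (hb _ (ha 0)).2.1 : a 0 < a 1) (hle 1)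
    refine ⟨⨆ n, a n, ⟨iSup_nat_lt_omega1 ha, pos_of_gt hlt, fun β hβ => ?_⟩, hlt⟩
    obtain ⟨n, hn⟩ := Ordinal.lt_iSup_iff.1 hβ
    refine lt_of_lt_of_le ?_ (hle (n + 1))
    rw [ha_succ]
    exact (hb _ (ha n)).2.2 β hn.le
  · intro S hS ⟨s, hs⟩ hbdd hlt
    refine ⟨hlt, lt_of_lt_of_le (hS hs).2.1 (le_csSup hbdd hs), fun β hβ => ?_⟩
    obtain ⟨t, ht, hβt⟩ := exists_lt_of_lt_csSup ⟨s, hs⟩ hβ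
    exact lt_of_lt_of_le ((hS ht).2.2 β hβt) (le_csSup hbdd ht)

/-- Dependent choice along `ω₁` for a relation depending only on earlier values. -/
theorem exists_forall_lt_omega1 {S : Type*} [Nonempty S]
    {R : Ordinal.{0} → (Ordinal.{0} → S) → S → Prop}
    (hlocal : ∀ α f g s, (∀ β < α, f β = g β) → R α f s → R α g s)
    (hstep : ∀ α < omega1, ∀ f, (∀ β < α, R β f (f β)) → ∃ s, R α f s) :
    ∃ f : Ordinal.{0} → S, ∀ α < omega1, R α f (f α) := by
  classical
  let s₀ : S := Classical.arbitrary S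
  let f : Ordinal.{0} → S := WellFounded.fix (C := fun _ => S) (wellFounded_lt (α := Ordinal.{0}))
    fun α prev => Classical.epsilon (R α fun β => if h : β < α then prev β h else s₀)
  have hf : ∀ α, f α = Classical.epsilon (R α fun β => if β < α then f β else s₀) := by
    intro α
    have h := WellFounded.fix_eq (C := fun _ => S) (wellFounded_lt (α := Ordinal.{0}))
      (fun α prev => Classical.epsilon (R α fun β => if h : β < α then prev β h else s₀)) α
    simpa only [dite_eq_ite] using h
  refine ⟨f, fun α => ?_⟩
  induction α using WellFoundedLT.induction with
  | ind α ih =>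
    intro hα
    obtain ⟨s, hs⟩ := hstep α hα f fun β hβ => ih β hβ (hβ.trans hα)
    have h2 := Classical.epsilon_spec (p := R α fun β => if β < α then f β else s₀)
      ⟨s, hlocal α f _ s (fun β hβ => by simp [hβ]) hs⟩
    rw [← hf] at h2
    exact hlocal α _ f _ (fun β hβ => by simp [hβ]) h2

/-- The ordinals below `α` whose shifts by `ω` lie in `A`. -/
def codedIndices (A : Set Ordinal.{0}) (α : Ordinal.{0}) : Set Ordinal.{0} :=
  {β | β < α ∧ Ordinal.omega0 + β ∈ A}

/-- The members of the sequence `C` whose (finite) index lies in `A`. -/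
def codedFamily (C : ℕ → Set Cantor) (A : Set Ordinal.{0}) : Set (Set Cantor) :=
  {U | ∃ n : ℕ, (n : Ordinal.{0}) ∈ A ∧ C n = U}

open Classical in
/-- The characteristic function of the finite ordinals in `A`. -/
noncomputable def codedPoint (A : Set Ordinal.{0}) : Cantor :=
  fun n => if (n : Ordinal.{0}) ∈ A then 1 else 0

/-- The nonempty clopen sets together with the families constructed before `α`. -/
def priorFamily (f : Ordinal.{0} → Set (Set Cantor) × Cantor) (α : Ordinal.{0}) :
    Set (Set Cantor) :=
  {p | IsClopen p ∧ p.Nonempty} ∪ ⋃ β < α, (f β).1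

/-- The already constructed points with index coded by `A`. -/
def priorPoints (A : Set Ordinal.{0}) (f : Ordinal.{0} → Set (Set Cantor) × Cantor)
    (α : Ordinal.{0}) : Set Cantor :=
  (fun β => (f β).2) '' codedIndices A α

/-- The requirements on the family and the point constructed at `α`, given the guess `A`. -/
structure IsStage (C : ℕ → Set Cantor) (A : Set Ordinal.{0}) (α : Ordinal.{0})
    (f : Ordinal.{0} → Set (Set Cantor) × Cantor) (s : Set (Set Cantor) × Cantor) : Prop where
  countable : s.1.Countable
  isRichFamily : IsRichFamily s.1
  exists_subset : ∀ p ∈ priorFamily f α, ∃ q ∈ s.1, q ⊆ p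
  subset_sUnion : ∀ q ∈ s.1, ∀ β < α, q ⊆ ⋃₀ (f β).1
  mem_sUnion : s.2 ∈ ⋃₀ s.1
  matching : ∀ m, ∃ i > m, s.2 + codedPoint A ∈ Aset i
  exists_cover : IsOmegaCover (codedFamily C A) (priorPoints A f α) →
    ∃ D : ℕ → Set Cantor, (∀ n, D n ∈ codedFamily C A) ∧ priorPoints A f α ⊆ eventualSet D ∧
      ∀ q ∈ s.1, ∀ x ∈ q, x ∈ eventualSet D ∨
        ∃ Q ∈ priorFamily f α, x ∈ Q ∧ Q ∩ priorPoints A f α = ∅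

theorem IsStage.congr {C : ℕ → Set Cantor} {A : Set Ordinal.{0}} {α : Ordinal.{0}}
    {f g : Ordinal.{0} → Set (Set Cantor) × Cantor} {s : Set (Set Cantor) × Cantor}
    (h : IsStage C A α f s) (hfg : ∀ β < α, f β = g β) : IsStage C A α g s := by
  have h1 : priorFamily f α = priorFamily g α := by
    unfold priorFamily
    congr 1
    exact iUnion₂_congr fun β hβ => by rw [hfg β hβ]
  have h2 : priorPoints A f α = priorPoints A g α :=
    image_congr fun β hβ => by rw [hfg β hβ.1]
  refine ⟨h.countable, h.isRichFamily, h1 ▸ h.exists_subset, fun q hq β hβ => ?_, h.mem_sUnion,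
    h.matching, h2 ▸ h1 ▸ h.exists_cover⟩
  rw [← hfg β hβ]
  exact h.subset_sUnion q hq β hβ

theorem mem_priorFamily_of_isClopen {f : Ordinal.{0} → Set (Set Cantor) × Cantor}
    {α : Ordinal.{0}} {p : Set Cantor} (hp : IsClopen p) (hne : p.Nonempty) :
    p ∈ priorFamily f α := Or.inl ⟨hp, hne⟩

theorem mem_priorFamily_of_lt {f : Ordinal.{0} → Set (Set Cantor) × Cantor}
    {α β : Ordinal.{0}} (hβ : β < α) {p : Set Cantor} (hp : p ∈ (f β).1) :
    p ∈ priorFamily f α := Or.inr (mem_iUnion₂.2 ⟨β, hβ, hp⟩)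

theorem mem_priorFamily {f : Ordinal.{0} → Set (Set Cantor) × Cantor} {α : Ordinal.{0}}
    {p : Set Cantor} :
    p ∈ priorFamily f α ↔ (IsClopen p ∧ p.Nonempty) ∨ ∃ β < α, p ∈ (f β).1 := by
  simp [priorFamily]

section Stage

variable {C : ℕ → Set Cantor} {A : Ordinal.{0} → Set Ordinal.{0}} {α : Ordinal.{0}}
  {f : Ordinal.{0} → Set (Set Cantor) × Cantor}

theorem countable_priorFamily (hα : α < omega1) (hf : ∀ β < α, IsStage C (A β) β f (f β)) :
    (priorFamily f α).Countable :=
  (countable_isClopen_cantor.mono fun _ h => h.1).union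
    ((countable_Iio_of_lt_omega1 hα).biUnion fun β hβ => (hf β hβ).countable)

theorem isRichFamily_priorFamily (hf : ∀ β < α, IsStage C (A β) β f (f β)) :
    IsRichFamily (priorFamily f α) where
  isClosed p hp := by
    rcases mem_priorFamily.1 hp with h | ⟨β, hβ, h⟩
    · exact h.1.isClosed
    · exact (hf β hβ).isRichFamily.isClosed p h
  nonempty p hp := by
    rcases mem_priorFamily.1 hp with h | ⟨β, hβ, h⟩
    · exact h.2
    · exact (hf β hβ).isRichFamily.nonempty p h
  isRich p hp := by
    rcases mem_priorFamily.1 hp with h | ⟨β, hβ, h⟩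
    · simpa using isRich_inter isRich_univ h.1.isOpen
    · exact (hf β hβ).isRichFamily.isRich p h
  exists_subset p hp U hU hne := by
    rcases mem_priorFamily.1 hp with h | ⟨β, hβ, h⟩
    · obtain ⟨x, hx⟩ := hne
      obtain ⟨K, hK, hxK, hKU⟩ := exists_isClopen_finite_subset (h.1.isOpen.inter hU)
        (finite_singleton x) (singleton_subset_iff.2 hx)
      exact ⟨K, mem_priorFamily_of_isClopen hK ⟨x, singleton_subset_iff.1 hxK⟩, hKU⟩
    · obtain ⟨q, hq, hqs⟩ := (hf β hβ).isRichFamily.exists_subset p h U hU hne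
      exact ⟨q, mem_priorFamily_of_lt hβ hq, hqs⟩

theorem exists_priorFamily_subset_inter_sUnion (hf : ∀ β < α, IsStage C (A β) β f (f β))
    {β : Ordinal.{0}} (hβ : β < α) {p : Set Cantor} (hp : p ∈ priorFamily f α) :
    ∃ q ∈ priorFamily f α, q ⊆ p ∩ ⋃₀ (f β).1 := by
  by_cases h : p ∈ priorFamily f β
  · obtain ⟨q, hq, hqp⟩ := (hf β hβ).exists_subset p h
    exact ⟨q, mem_priorFamily_of_lt hβ hq, subset_inter hqp (subset_sUnion_of_mem hq)⟩
  · refine ⟨p, hp, subset_inter subset_rfl ?_⟩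
    rcases mem_priorFamily.1 hp with h' | ⟨γ, hγ, h'⟩
    · exact absurd (mem_priorFamily_of_isClopen h'.1 h'.2) h
    · rcases lt_trichotomy γ β with hlt | rfl | hgt
      · exact absurd (mem_priorFamily_of_lt hlt h') h
      · exact subset_sUnion_of_mem h'
      · exact (hf γ hγ).subset_sUnion p h' β hgt

theorem exists_isStage (hC : ∀ n, IsOpen (C n)) (hα : α < omega1)
    (hf : ∀ β < α, IsStage C (A β) β f (f β)) : ∃ s, IsStage C (A α) α f s := by
  classical
  have hαc := countable_Iio_of_lt_omega1 hα
  obtain ⟨b, hb⟩ := countable_iff_exists_subset_range.1 hαc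
  let W : ℕ → Set Cantor := fun n => if b n < α then ⋃₀ (f (b n)).1 else univ
  have hrich := isRichFamily_priorFamily hf
  have hW : ∀ n, ∀ p ∈ priorFamily f α, ∃ q ∈ priorFamily f α, q ⊆ p ∩ W n := by
    intro n p hp
    by_cases hn : b n < α
    · simpa [W, hn] using exists_priorFamily_subset_inter_sUnion hf hn hp
    · exact ⟨p, hp, by simp [W, hn]⟩
  have hY : (priorPoints (A α) f α).Countable := (hαc.mono fun β hβ => hβ.1).image _
  have hJo : ∀ U ∈ codedFamily C (A α), IsOpen U := by
    rintro _ ⟨n, -, rfl⟩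
    exact hC n
  obtain ⟨𝒯, h𝒯c, h𝒯, hsub, h𝒯W, hcover⟩ : ∃ 𝒯 : Set (Set Cantor), 𝒯.Countable ∧
      IsRichFamily 𝒯 ∧ (∀ p ∈ priorFamily f α, ∀ U, IsOpen U → (p ∩ U).Nonempty →
        ∃ q ∈ 𝒯, q ⊆ p ∩ U) ∧ (∀ q ∈ 𝒯, ∀ n, q ⊆ W n) ∧
      (IsOmegaCover (codedFamily C (A α)) (priorPoints (A α) f α) →
        ∃ D : ℕ → Set Cantor, (∀ n, D n ∈ codedFamily C (A α)) ∧
          priorPoints (A α) f α ⊆ eventualSet D ∧ ∀ q ∈ 𝒯, ∀ x ∈ q, x ∈ eventualSet D ∨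
            ∃ Q ∈ priorFamily f α, x ∈ Q ∧ Q ∩ priorPoints (A α) f α = ∅) := by
    by_cases hJ : IsOmegaCover (codedFamily C (A α)) (priorPoints (A α) f α)
    · obtain ⟨𝒯, h1, h2, h3, h4, h5⟩ :=
        hrich.exists_fusion (countable_priorFamily hα hf) hW hY hJo hJ
      exact ⟨𝒯, h1, h2, h3, h4, fun _ => h5⟩
    · obtain ⟨𝒯, h1, h2, h3, h4, -⟩ :=
        hrich.exists_fusion (countable_priorFamily hα hf) hW countable_empty
          (J := {univ}) (by simp) (fun F _ => ⟨univ, rfl, subset_univ _⟩)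
      exact ⟨𝒯, h1, h2, h3, h4, fun h => absurd h hJ⟩
  have hdense : ∀ p ∈ priorFamily f α, ∃ q ∈ 𝒯, q ⊆ p := fun p hp => by
    simpa using hsub p hp univ isOpen_univ (by simpa using hrich.nonempty p hp)
  obtain ⟨q, hq, -⟩ := hdense univ (mem_priorFamily_of_isClopen isClopen_univ univ_nonempty)
  obtain ⟨x, hx, hxz⟩ := exists_mem_frequently_add_mem_Aset (h𝒯.isClosed q hq)
    (h𝒯.nonempty q hq) (h𝒯.isRich q hq) (codedPoint (A α))
  refine ⟨(𝒯, x), h𝒯c, h𝒯, hdense, fun q hq β hβ => ?_, ⟨q, hq, hx⟩, hxz, hcover⟩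
  obtain ⟨n, rfl⟩ := hb hβ
  have := h𝒯W q hq n
  have hβ' : b n < α := hβ
  simpa only [W, hβ', if_true] using this

end Stage

theorem exists_isClopen_enumeration :
    ∃ C : ℕ → Set Cantor, (∀ n, IsClopen (C n)) ∧ ∀ K, IsClopen K → ∃ n, C n = K := by
  obtain ⟨C, hC⟩ := countable_isClopen_cantor.exists_eq_range ⟨univ, isClopen_univ⟩
  refine ⟨C, fun n => ?_, fun K hK => ?_⟩
  · have : C n ∈ {K : Set Cantor | IsClopen K} := hC ▸ mem_range_self n
    exact this
  · have : K ∈ range C := hC ▸ hK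
    exact this

/-- A set coding a set of natural numbers and a set of ordinals. -/
def codeSet (N : Set ℕ) (E : Set Ordinal.{0}) : Set Ordinal.{0} :=
  (fun n : ℕ => (n : Ordinal.{0})) '' N ∪ (fun β => Ordinal.omega0 + β) '' E

theorem natCast_mem_codeSet {N : Set ℕ} {E : Set Ordinal.{0}} {n : ℕ} :
    (n : Ordinal.{0}) ∈ codeSet N E ↔ n ∈ N := by
  constructor
  · rintro (⟨m, hm, h⟩ | ⟨β, -, h⟩)
    · rwa [← Nat.cast_injective (R := Ordinal.{0}) h]
    · have h1 : Ordinal.omega0 ≤ (n : Ordinal.{0}) := h ▸ le_self_add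
      exact absurd (Ordinal.natCast_lt_omega0 n) h1.not_gt
  · exact fun h => Or.inl ⟨n, h, rfl⟩

theorem omega0_add_mem_codeSet {N : Set ℕ} {E : Set Ordinal.{0}} {β : Ordinal.{0}} :
    Ordinal.omega0 + β ∈ codeSet N E ↔ β ∈ E := by
  constructor
  · rintro (⟨m, -, h⟩ | ⟨γ, hγ, h⟩)
    · have h1 : Ordinal.omega0 ≤ (m : Ordinal.{0}) := by
        have h : (m : Ordinal.{0}) = Ordinal.omega0 + β := h
        rw [h]
        exact le_self_add
      exact absurd (Ordinal.natCast_lt_omega0 m) h1.not_gt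
    · rwa [← add_left_cancel h]
  · exact fun h => Or.inr ⟨β, h, rfl⟩

theorem codeSet_subset {N : Set ℕ} {E : Set Ordinal.{0}} (hE : E ⊆ Iio omega1) :
    codeSet N E ⊆ Iio omega1 := by
  rintro _ (⟨n, -, rfl⟩ | ⟨β, hβ, rfl⟩)
  · exact (Ordinal.natCast_lt_omega0 n).trans omega0_lt_omega1
  · exact omega0_add_lt_omega1 (hE hβ)

/-- A diamond sequence guesses every pair of a set of natural numbers and a subset of `ω₁` at an
ordinal closed under a given function. -/
theorem exists_guess {A : Ordinal.{0} → Set Ordinal.{0}}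
    (hA : ∀ B : Set Ordinal.{0}, B ⊆ Iio omega1 →
      IsStationaryIn {α | α < omega1 ∧ B ∩ Iio α = A α})
    (N : Set ℕ) {E : Set Ordinal.{0}} (hE : E ⊆ Iio omega1) {g : Ordinal.{0} → Ordinal.{0}}
    (hg : ∀ β < omega1, g β < omega1) :
    ∃ α < omega1, 0 < α ∧ (∀ β < α, g β < α) ∧ (∀ n : ℕ, (n : Ordinal.{0}) ∈ A α ↔ n ∈ N) ∧
      codedIndices (A α) α = E ∩ Iio α := by
  obtain ⟨α, ⟨hα, hBα⟩, -, hα0, hαg⟩ := hA _ (codeSet_subset (N := N) hE) _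
    (isClubIn_closurePoints (g := fun β => max (g β) (Ordinal.omega0 + β))
      fun β hβ => max_lt (hg β hβ) (omega0_add_lt_omega1 hβ))
  have hω : ∀ β < α, Ordinal.omega0 + β < α := fun β hβ =>
    (le_max_right _ _).trans_lt (hαg β hβ)
  refine ⟨α, hα, hα0, fun β hβ => (le_max_left _ _).trans_lt (hαg β hβ), fun n => ?_, ?_⟩
  · have hn : (n : Ordinal.{0}) < α :=
      (Ordinal.natCast_lt_omega0 n).trans (by simpa using hω 0 hα0)
    rw [← hBα, mem_inter_iff, natCast_mem_codeSet]
    exact and_iff_left hn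
  · ext β
    rw [codedIndices, mem_ofPred_eq, ← hBα, mem_inter_iff, omega0_add_mem_codeSet]
    exact ⟨fun h => ⟨h.2.1, h.1⟩, fun h => ⟨h.2, h.1, hω β h.2⟩⟩

theorem isGammaSet_of_isStage {C : ℕ → Set Cantor} {A : Ordinal.{0} → Set Ordinal.{0}}
    {f : Ordinal.{0} → Set (Set Cantor) × Cantor}
    (hCcl : ∀ K, IsClopen K → ∃ n, C n = K)
    (hA : ∀ B : Set Ordinal.{0}, B ⊆ Iio omega1 →
      IsStationaryIn {α | α < omega1 ∧ B ∩ Iio α = A α})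
    (hf : ∀ α < omega1, IsStage C (A α) α f (f α)) {Y : Set Cantor}
    (hY : Y ⊆ (fun α => (f α).2) '' Iio omega1) : IsGammaSet Y := by
  intro J hJo hJ
  let E : Set Ordinal.{0} := {β | β < omega1 ∧ (f β).2 ∈ Y}
  have hg : ∀ β, ∃ γ, β < omega1 → γ < omega1 ∧
      ∀ Q ∈ priorFamily f (Order.succ β), (Q ∩ Y).Nonempty → ∃ δ ∈ E, δ < γ ∧ (f δ).2 ∈ Q := by
    intro β
    by_cases hβ : β < omega1
    · have hβ' : Order.succ β < omega1 := by
        rw [omega1_eq] at *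
        exact (Cardinal.isSuccLimit_omega 1).succ_lt hβ
      have hc := countable_priorFamily hβ' fun γ hγ => hf γ (hγ.trans hβ')
      have hd : ∀ Q, ∃ δ, (Q ∩ Y).Nonempty → δ ∈ E ∧ (f δ).2 ∈ Q := by
        intro Q
        by_cases hQ : (Q ∩ Y).Nonempty
        · obtain ⟨y, hyQ, hyY⟩ := hQ
          obtain ⟨δ, hδ, rfl⟩ := hY hyY
          exact ⟨δ, fun _ => ⟨⟨hδ, hyY⟩, hyQ⟩⟩
        · exact ⟨0, fun h => absurd h hQ⟩
      choose d hd using hd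
      obtain ⟨γ, hγ, h⟩ := exists_lt_omega1_bound
        ((hc.mono (sep_subset _ fun Q => (Q ∩ Y).Nonempty)).image d) (by
          rintro _ ⟨Q, hQ, rfl⟩
          exact (hd Q hQ.2).1.1)
      exact ⟨γ, fun _ => ⟨hγ, fun Q hQ hne =>
        ⟨d Q, (hd Q hne).1, h _ ⟨Q, ⟨hQ, hne⟩, rfl⟩, (hd Q hne).2⟩⟩⟩
    · exact ⟨0, fun h => absurd h hβ⟩
  choose g hg using hg
  obtain ⟨α, hα, hα0, hαg, hN, hE⟩ := exists_guess hA {n | ∃ U ∈ J, C n ⊆ U}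
    (E := E) (fun β hβ => hβ.1) (fun β hβ => (hg β hβ).1)
  have hpts : priorPoints (A α) f α ⊆ Y := by
    rintro _ ⟨β, hβ, rfl⟩
    rw [hE] at hβ
    exact hβ.1.2
  have hcov : IsOmegaCover (codedFamily C (A α)) (priorPoints (A α) f α) := by
    intro F hF
    obtain ⟨U, hU, hFU⟩ := hJ F (hF.trans hpts)
    obtain ⟨K, hK, hFK, hKU⟩ := exists_isClopen_finite_subset (hJo U hU) F.finite_toSet hFU
    obtain ⟨n, rfl⟩ := hCcl K hK
    exact ⟨C n, ⟨n, (hN n).2 ⟨U, hU, hKU⟩, rfl⟩, hFK⟩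
  obtain ⟨D, hD, hDpts, hDfam⟩ := (hf α hα).exists_cover hcov
  have hDJ : ∀ n, ∃ U ∈ J, D n ⊆ U := by
    intro n
    obtain ⟨k, hk, hkD⟩ := hD n
    exact hkD ▸ (hN k).1 hk
  choose U hUJ hDU using hDJ
  refine ⟨U, hUJ, fun y hy => ?_⟩
  suffices h : y ∈ eventualSet D by
    obtain ⟨m, hm⟩ := mem_eventualSet.1 h
    exact mem_eventualSet.2 ⟨m, fun n hn => hDU n (hm n hn)⟩
  obtain ⟨γ, hγ, rfl⟩ := hY hy
  rcases lt_or_ge γ α with hγα | hγα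
  · refine hDpts ⟨γ, ?_, rfl⟩
    rw [hE]
    exact ⟨⟨hγ, hy⟩, hγα⟩
  · have hmem : (f γ).2 ∈ ⋃₀ (f α).1 := by
      rcases hγα.eq_or_lt with rfl | hlt
      · exact (hf α hα).mem_sUnion
      · obtain ⟨q, hq, hxq⟩ := (hf γ hγ).mem_sUnion
        exact (hf γ hγ).subset_sUnion q hq α hlt hxq
    obtain ⟨q, hq, hxq⟩ := hmem
    refine (hDfam q hq _ hxq).resolve_right ?_
    rintro ⟨Q, hQ, hxQ, hQe⟩
    obtain ⟨β, hβα, hQβ⟩ : ∃ β < α, Q ∈ priorFamily f (Order.succ β) := by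
      rcases mem_priorFamily.1 hQ with h | ⟨β, hβ, h⟩
      · exact ⟨0, hα0, mem_priorFamily_of_isClopen h.1 h.2⟩
      · exact ⟨β, hβ, mem_priorFamily_of_lt (Order.lt_succ β) h⟩
    obtain ⟨δ, hδE, hδ, hδQ⟩ := (hg β (hβα.trans hα)).2 Q hQβ ⟨_, hxQ, hy⟩
    have : (f δ).2 ∈ Q ∩ priorPoints (A α) f α := by
      refine ⟨hδQ, δ, ?_, rfl⟩
      rw [hE]
      exact ⟨hδE, hδ.trans (hαg β hβα)⟩
    rw [hQe] at this
    exact this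

theorem add_Gset_eq_univ_of_isStage {C : ℕ → Set Cantor} {A : Ordinal.{0} → Set Ordinal.{0}}
    {f : Ordinal.{0} → Set (Set Cantor) × Cantor}
    (hA : ∀ B : Set Ordinal.{0}, B ⊆ Iio omega1 →
      IsStationaryIn {α | α < omega1 ∧ B ∩ Iio α = A α})
    (hf : ∀ α < omega1, IsStage C (A α) α f (f α)) :
    (fun α => (f α).2) '' Iio omega1 + Gset = univ := by
  refine eq_univ_of_forall fun z => ?_
  obtain ⟨α, hα, -, -, hN, -⟩ := exists_guess hA {n | z n = 1} (empty_subset _)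
    (g := id) fun β hβ => hβ
  have hz : codedPoint (A α) = z := by
    funext n
    have h01 : ∀ a : ZMod 2, a ≠ 1 → 0 = a := by decide
    by_cases h : z n = 1
    · simp [codedPoint, (hN n).2 h, h]
    · have : (n : Ordinal.{0}) ∉ A α := fun h' => h ((hN n).1 h')
      simp only [codedPoint, this, if_false]
      exact h01 _ h
  refine mem_add.2 ⟨(f α).2, ⟨α, hα, rfl⟩, (f α).2 + z, ?_, ?_⟩
  · rw [mem_Gset, ← hz]
    exact (hf α hα).matching
  · rw [← add_assoc]
    funext n
    simp [CharTwo.add_self_eq_zero]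

theorem mk_eq_aleph_one_of_add_Gset_eq_univ {x : Ordinal.{0} → Cantor}
    (h : x '' Iio omega1 + Gset = univ) : Cardinal.mk (x '' Iio omega1) = Cardinal.aleph 1 := by
  refine le_antisymm ?_ ?_
  · have := Cardinal.mk_image_le_lift (f := x) (s := Iio omega1)
    rw [lift_mk_Iio_omega1] at this
    simpa using this
  · rw [← Cardinal.succ_aleph0, Order.succ_le_iff, ← not_le, Cardinal.le_aleph0_iff_set_countable]
    exact fun hc => add_Gset_ne_univ_of_countable hc h

/-- **Theorem 2.** Assume `◊`. Then there is a set `X ⊆ 2^ω` of cardinality `ℵ₁` which is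
a hereditary γ-set (every subset is a γ-set) but is not strongly meager: there is a null
set `G` (for the product measure) with `X + G = 2^ω`. -/
theorem hereditary_gammaSet_not_stronglyMeager_of_diamond (hd : DiamondPrinciple) :
    ∃ X : Set Cantor, Cardinal.mk X = Cardinal.aleph 1 ∧
      (∀ Y ⊆ X, IsGammaSet Y) ∧
      ∃ G : Set Cantor, (∀ μ : Measure Cantor, IsCantorProductMeasure μ → μ G = 0) ∧
        X + G = Set.univ := by
  obtain ⟨A, -, hA⟩ := hd
  obtain ⟨C, hC, hCcl⟩ := exists_isClopen_enumeration
  obtain ⟨f, hf⟩ := exists_forall_lt_omega1 (R := fun α f s => IsStage C (A α) α f s)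
    (fun _ _ _ _ hfg h => h.congr hfg)
    (fun _ hα _ h => exists_isStage (fun n => (hC n).isOpen) hα h)
  have hX := add_Gset_eq_univ_of_isStage hA hf
  exact ⟨_, mk_eq_aleph_one_of_add_Gset_eq_univ hX,
    fun _ hY => isGammaSet_of_isStage hCcl hA hf hY, Gset,
    fun _ hμ => measure_Gset_eq_zero hμ, hX⟩
end

section
/- Assume that 𝔭 = 2^ℵ₀, i.e., every family F of infinite subsets of ω with |F| < 2^ℵ₀ such that every finite subfamily of F has infinite intersection admits an infinite pseudo-intersection. Then there exists a set Y ⊆ ℝ which is a γ-set (in the subspace topology of ℝ) and a Lebesgue measure-zero set G' ⊆ ℝ such that Y + G' = ℝ; in particular, Y is a γ-set of reals which is not strongly meager. -/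
open Set MeasureTheory Filter Pointwise
open scoped ENNReal

open Cardinal in
/-- Under `𝔭 = 2^{ℵ₀}`, pseudo-intersections exist for indexed families of subsets of any
countable type. -/
lemma PseudoIntersectionNumberEqContinuum.exists_pseudoIntersection
    (hp : PseudoIntersectionNumberEqContinuum) {ι X : Type} [Countable ι] (F : Set X)
    (hF : #F < 2 ^ ℵ₀) (C : X → Set ι)
    (hC : ∀ G : Finset X, ↑G ⊆ F → (⋂ x ∈ G, C x).Infinite) :
    ∃ A : Set ι, A.Infinite ∧ ∀ x ∈ F, (A \ C x).Finite := by
  have : Infinite ι := Set.infinite_univ_iff.1 (by simpa using hC ∅ (by simp))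
  obtain ⟨e⟩ : Nonempty (ι ≃ ℕ) := nonempty_equiv_of_countable
  obtain ⟨A, hA, hAC⟩ := hp ((fun x ↦ e '' C x) '' F) (mk_image_le.trans_lt hF) (by
      rintro _ ⟨x, hx, rfl⟩
      have := hC {x} (by simpa using hx)
      simp only [Finset.mem_singleton, iInter_iInter_eq_left] at this
      exact this.image e.injective.injOn) (by
      intro G hG
      obtain ⟨G', hG', rfl⟩ := Finset.subset_set_image_iff.1 hG
      refine ((hC G' hG').image e.injective.injOn).mono ?_
      rintro _ ⟨i, hi, rfl⟩
      simp only [mem_iInter] at hi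
      simpa using hi)
  refine ⟨e ⁻¹' A, hA.preimage (by simp), fun x hx ↦ ?_⟩
  refine ((hAC _ ⟨x, hx, rfl⟩).preimage e.injective.injOn).subset ?_
  rintro i ⟨hi, hix⟩
  exact ⟨hi, by simpa using hix⟩

open Cardinal in
/-- Under `𝔭 = 2^{ℵ₀}`, every countable ω-cover of a set of size less than the continuum
contains a sequence converging to that set. -/
lemma PseudoIntersectionNumberEqContinuum.exists_gamma_seq
    (hp : PseudoIntersectionNumberEqContinuum) {ι X : Type} [Countable ι] (U : ι → Set X)
    (J : Set ι) (F : Set X) (hF : #F < 2 ^ ℵ₀)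
    (hJ : ∀ G : Finset X, ↑G ⊆ F → ∃ d ∈ J, ↑G ⊆ U d) :
    ∃ D : ℕ → ι, (∀ n, D n ∈ J) ∧ ∀ x ∈ F, ∀ᶠ n in atTop, x ∈ U (D n) := by
  obtain ⟨A, hA, hAF⟩ := hp.exists_pseudoIntersection (ι := ℕ × J) F hF
    (fun x ↦ {p | x ∈ U p.2}) (by
      intro G hG
      obtain ⟨d, hd, hGd⟩ := hJ G hG
      refine (Set.infinite_range_of_injective
        (f := fun m : ℕ ↦ ((m, ⟨d, hd⟩) : ℕ × J)) fun a b h ↦ by simpa using h).mono ?_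
      rintro _ ⟨m, rfl⟩
      simpa using fun x hx ↦ hGd hx)
  let e := hA.natEmbedding
  refine ⟨fun n ↦ (e n).1.2, fun n ↦ (e n).1.2.2, fun x hx ↦ ?_⟩
  rw [← Nat.cofinite_eq_atTop, Filter.eventually_cofinite]
  refine ((hAF x hx).preimage (f := fun n ↦ (e n).1)
    (Subtype.val_injective.comp e.injective).injOn).subset ?_
  exact fun n hn ↦ ⟨(e n).2, hn⟩

/-- The dyadic blocks `{i | Nat.log 2 i = n}` on which `x` is constantly one. -/
def fullBlocks (x : ℕ → Fin 2) : Set ℕ := {n | ∀ i, Nat.log 2 i = n → x i = 1}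

lemma tendsto_log_two : Tendsto (Nat.log 2) atTop atTop :=
  tendsto_atTop.2 fun n ↦ (eventually_ge_atTop (2 ^ n)).mono fun _ hi ↦
    Nat.le_log_of_pow_le one_lt_two hi

lemma eventually_le_of_finite_diff_fullBlocks {x y : ℕ → Fin 2} {A : Set ℕ}
    (hA : (A \ fullBlocks x).Finite) (hy : ∀ i, y i ≠ 0 → Nat.log 2 i ∈ A) :
    ∀ᶠ i in atTop, y i ≤ x i := by
  have h : ∀ᶠ n in atTop, n ∉ A \ fullBlocks x := by
    rw [← Nat.cofinite_eq_atTop]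
    exact hA.eventually_cofinite_notMem
  filter_upwards [tendsto_log_two.eventually h] with i hi
  by_cases h0 : y i = 0
  · simp [h0]
  · have h1 : x i = 1 := by
      by_contra hx
      exact hi ⟨hy i h0, fun hf ↦ hx (hf i rfl)⟩
    rw [h1]
    exact Fin.le_last _

lemma finite_diff_fullBlocks {x y : ℕ → Fin 2} (h : ∀ᶠ i in atTop, y i ≤ x i) :
    (fullBlocks y \ fullBlocks x).Finite := by
  obtain ⟨N, hN⟩ := eventually_atTop.1 h
  refine (Set.finite_Iic (Nat.log 2 N)).subset ?_
  rintro n ⟨hy, hx⟩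
  by_contra hn
  simp only [mem_Iic, not_le] at hn
  refine hx fun i hi ↦ ?_
  have hNi : N ≤ i := by
    by_contra! hlt
    have := Nat.log_mono_right (b := 2) hlt.le
    omega
  have := hN i hNi
  rw [hy i hi] at this
  exact le_antisymm (Fin.le_last _) this

/-- A member of an open sequence containing all rationals contains every point that
vanishes on a suitable interval. -/
lemma exists_interval_forall_mem {U : ℕ → Set (ℕ → Fin 2)} (hU : ∀ n, IsOpen (U n))
    (hQ : ∀ z : ℕ → Fin 2, (∀ᶠ i in atTop, z i = 0) → ∀ᶠ n in atTop, z ∈ U n) (k : ℕ) :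
    ∃ n k', k ≤ n ∧ k < k' ∧ ∀ z : ℕ → Fin 2, (∀ i ∈ Set.Ico k k', z i = 0) → z ∈ U n := by
  let r : (Fin k → Fin 2) → ℕ → Fin 2 := fun s i ↦ if h : i < k then s ⟨i, h⟩ else 0
  have hr : ∀ s, ∀ᶠ n in atTop, r s ∈ U n := fun s ↦
    hQ _ ((eventually_ge_atTop k).mono fun i hi ↦ by simp [r, hi])
  obtain ⟨n, hn, hkn⟩ := ((eventually_all.2 hr).and (eventually_ge_atTop k)).exists
  have hopen : ∀ s, ∃ m, ∀ z : ℕ → Fin 2, (∀ i < m, z i = r s i) → z ∈ U n := by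
    intro s
    obtain ⟨_, ⟨x, m, rfl⟩, hx, hsub⟩ :=
      (PiNat.isTopologicalBasis_cylinders (E := fun _ : ℕ ↦ Fin 2)).exists_subset_of_mem_open
        (hn s) (hU n)
    refine ⟨m, fun z hz ↦ hsub fun i hi ↦ ?_⟩
    rw [hz i hi]
    exact hx i hi
  choose m hm using hopen
  refine ⟨n, (Finset.univ.sup m) ⊔ (k + 1), hkn, by simp, fun z hz ↦ ?_⟩
  refine hm (fun i ↦ z i) z fun i hi ↦ ?_
  have hi' := hi.trans_le (Finset.le_sup (f := m) (Finset.mem_univ (fun i : Fin k ↦ z i)))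
  by_cases hik : i < k
  · simp [r, hik]
  · simp only [r, hik, dite_false]
    exact hz i ⟨not_lt.1 hik, hi'.trans_le le_sup_left⟩

/-- Thinning out a set `A` of dyadic blocks to a point `y` with the following properties:
`y` has infinitely many full blocks, `y` agrees with `w` on infinitely many blocks, and a
subsequence of `U` converges to every point almost below `y`. -/
lemma exists_thinning {U : ℕ → Set (ℕ → Fin 2)} (hU : ∀ n, IsOpen (U n))
    (hQ : ∀ z : ℕ → Fin 2, (∀ᶠ i in atTop, z i = 0) → ∀ᶠ n in atTop, z ∈ U n)
    {A : Set ℕ} (hA : A.Infinite) (w : ℕ → Fin 2) :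
    ∃ (y : ℕ → Fin 2) (φ : ℕ → ℕ), Tendsto φ atTop atTop ∧
      (∀ i, y i ≠ 0 → Nat.log 2 i ∈ A) ∧ (fullBlocks y).Infinite ∧
      (∃ᶠ n in atTop, ∀ i, Nat.log 2 i = n → y i = w i) ∧
      ∀ z : ℕ → Fin 2, (∀ᶠ i in atTop, z i ≤ y i) → ∀ᶠ j in atTop, z ∈ U (φ j) := by
  classical
  choose ν κ hν hκ hκU using exists_interval_forall_mem hU hQ
  have hA' : ∀ k, ∃ a ∈ A, κ k < a := fun k ↦ hA.exists_gt (κ k)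
  choose α hαA hα using hA'
  let l : ℕ → ℕ := fun j ↦ Nat.rec 0 (fun _ k ↦ 2 ^ (α k + 1)) j
  have hl : ∀ j, l (j + 1) = 2 ^ (α (l j) + 1) := fun j ↦ rfl
  have hαl : ∀ j, α (l j) < l (j + 1) := fun j ↦ by
    rw [hl]
    exact (Nat.lt_succ_self _).trans Nat.lt_two_pow_self
  have hlmono : StrictMono l := strictMono_nat_of_lt_succ fun j ↦
    ((hκ _).trans (hα _)).trans (hαl j)
  have hκmono : StrictMono fun j ↦ κ (l j) := strictMono_nat_of_lt_succ fun j ↦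
    ((hα _).trans (hαl j)).trans (hκ _)
  have hαmono : StrictMono fun j ↦ α (l j) := strictMono_nat_of_lt_succ fun j ↦
    ((hαl j).trans (hκ _)).trans (hα _)
  let y : ℕ → Fin 2 := fun i ↦
    if ∃ j, Nat.log 2 i = α (l (2 * j)) then 1
    else if ∃ j, Nat.log 2 i = α (l (2 * j + 1)) then w i else 0
  have hy : ∀ i, y i ≠ 0 → ∃ j, Nat.log 2 i = α (l j) := by
    intro i hi
    by_contra! h
    exact hi (by simp [y, h])
  have hyzero : ∀ j, ∀ i ∈ Set.Ico (l j) (κ (l j)), y i = 0 := by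
    rintro j i ⟨hji, hij⟩
    by_contra h
    obtain ⟨m, hm⟩ := hy i h
    have hi0 : i ≠ 0 := by
      rintro rfl
      have := hα (l m)
      have := hκ (l m)
      simp at hm
      omega
    obtain hmj | hjm := lt_or_ge m j
    · have h1 : i < l (m + 1) := by
        rw [hl, ← hm]
        exact Nat.lt_pow_succ_log_self one_lt_two i
      have h2 : l (m + 1) ≤ l j := hlmono.monotone hmj
      omega
    · have h1 : 2 ^ α (l m) ≤ i := hm ▸ Nat.pow_log_le_self 2 hi0
      have h2 : α (l m) < 2 ^ α (l m) := Nat.lt_two_pow_self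
      have h3 : κ (l j) ≤ κ (l m) := hκmono.monotone hjm
      have h4 := hα (l m)
      omega
  refine ⟨y, fun j ↦ ν (l j), tendsto_atTop_mono (fun j ↦ (hlmono.id_le j).trans (hν _))
    tendsto_id, ?_, ?_, ?_, ?_⟩
  · intro i hi
    obtain ⟨j, hj⟩ := hy i hi
    exact hj ▸ hαA _
  · refine (Set.infinite_range_of_injective (f := fun j ↦ α (l (2 * j)))
      fun a b h ↦ by simpa using hαmono.injective h).mono ?_
    rintro _ ⟨j, rfl⟩ i hi
    exact if_pos ⟨j, hi⟩
  · rw [Nat.frequently_atTop_iff_infinite]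
    refine (Set.infinite_range_of_injective (f := fun j ↦ α (l (2 * j + 1)))
      fun a b h ↦ by
        have : 2 * a + 1 = 2 * b + 1 := hαmono.injective h
        omega).mono ?_
    rintro _ ⟨j, rfl⟩ i hi
    have h1 : ¬ ∃ j, Nat.log 2 i = α (l (2 * j)) := by
      rintro ⟨m, hm⟩
      have : 2 * j + 1 = 2 * m := hαmono.injective (hi.symm.trans hm)
      omega
    exact (if_neg h1).trans (if_pos ⟨j, hi⟩)
  · intro z hz
    obtain ⟨N, hN⟩ := eventually_atTop.1 hz
    filter_upwards [eventually_ge_atTop N] with j hj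
    refine hκU _ z fun i hi ↦ ?_
    have h1 := hN i ((hj.trans (hlmono.id_le j)).trans hi.1)
    rw [hyzero j i hi] at h1
    exact le_antisymm h1 (Fin.zero_le _)

/-- Transfinite recursion choosing at each stage a point related to the set of earlier ones. -/
lemma exists_forall_image_Iio {T X : Type*} [LinearOrder T] [WellFoundedLT T] [Nonempty X]
    (P : T → Set X → X → Prop)
    (hP : ∀ (y : T → X) (t : T), (∀ s < t, P s (y '' Iio s) (y s)) →
      ∃ x, P t (y '' Iio t) x) :
    ∃ y : T → X, ∀ t, P t (y '' Iio t) (y t) := by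
  classical
  let y : T → X := wellFounded_lt.fix fun t rec ↦
    Classical.epsilon (P t (Set.range fun s : Iio t ↦ rec s s.2))
  have hy : ∀ t, y t = Classical.epsilon (P t (y '' Iio t)) := by
    intro t
    rw [image_eq_range]
    exact wellFounded_lt.fix_eq _ t
  refine ⟨y, fun t ↦ ?_⟩
  refine wellFounded_lt.induction (C := fun t ↦ P t (y '' Iio t) (y t)) t fun t ih ↦ ?_
  rw [hy t]
  exact Classical.epsilon_spec (hP y t ih)

lemma countable_eventually_zero :
    {z : ℕ → Fin 2 | ∀ᶠ i in atTop, z i = 0}.Countable := by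
  refine (Set.countable_range fun p : (Σ n : ℕ, Fin n → Fin 2) ↦
    fun i ↦ if h : i < p.1 then p.2 ⟨i, h⟩ else (0 : Fin 2)).mono ?_
  intro z hz
  obtain ⟨N, hN⟩ := eventually_atTop.1 hz
  refine ⟨⟨N, fun i ↦ z i⟩, funext fun i ↦ ?_⟩
  by_cases h : i < N
  · simp [h]
  · simp [h, hN i (not_lt.1 h)]

open Cardinal in
/-- A single step of the construction: `y` is almost below all of `F`, agrees with `w` on
infinitely many blocks, and handles the ω-cover indexed by `J`. -/
lemma PseudoIntersectionNumberEqContinuum.exists_almost_below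
    (hp : PseudoIntersectionNumberEqContinuum) {ι : Type} [Countable ι]
    {V : ι → Set (ℕ → Fin 2)} (hV : ∀ d, IsOpen (V d)) (F : Set (ℕ → Fin 2))
    (hF : #F < 2 ^ ℵ₀)
    (hfip : ∀ G : Finset (ℕ → Fin 2), ↑G ⊆ F → (⋂ x ∈ G, fullBlocks x).Infinite)
    (w : ℕ → Fin 2) (J : Set ι) :
    ∃ y : ℕ → Fin 2, (∀ x ∈ F, ∀ᶠ i in atTop, y i ≤ x i) ∧ (fullBlocks y).Infinite ∧
      (∃ᶠ n in atTop, ∀ i, Nat.log 2 i = n → y i = w i) ∧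
      ((∀ G : Finset (ℕ → Fin 2), ↑G ⊆ F ∪ {z | ∀ᶠ i in atTop, z i = 0} →
          ∃ d ∈ J, ↑G ⊆ V d) →
        ∃ D : ℕ → ι, (∀ n, D n ∈ J) ∧ (∀ x ∈ F, ∀ᶠ n in atTop, x ∈ V (D n)) ∧
          ∀ z : ℕ → Fin 2, (∀ᶠ i in atTop, z i ≤ y i) → ∀ᶠ n in atTop, z ∈ V (D n)) := by
  obtain ⟨A, hA, hAF⟩ := hp.exists_pseudoIntersection F hF fullBlocks hfip
  by_cases hJ : ∀ G : Finset (ℕ → Fin 2), ↑G ⊆ F ∪ {z | ∀ᶠ i in atTop, z i = 0} →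
      ∃ d ∈ J, ↑G ⊆ V d
  · obtain ⟨D, hDJ, hD⟩ := hp.exists_gamma_seq V J (F ∪ {z | ∀ᶠ i in atTop, z i = 0})
      ((mk_union_le _ _).trans_lt (add_lt_of_lt (cantor ℵ₀).le hF
        (countable_eventually_zero.le_aleph0.trans_lt (cantor ℵ₀)))) hJ
    obtain ⟨y, φ, hφ, hyA, hy, hyw, hyU⟩ := exists_thinning (fun n ↦ hV (D n))
      (fun z hz ↦ hD z (Or.inr hz)) hA w
    exact ⟨y, fun x hx ↦ eventually_le_of_finite_diff_fullBlocks (hAF x hx) hyA, hy, hyw,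
      fun _ ↦ ⟨D ∘ φ, fun n ↦ hDJ _, fun x hx ↦ hφ.eventually (hD x (Or.inl hx)), hyU⟩⟩
  · obtain ⟨y, -, -, hyA, hy, hyw, -⟩ := exists_thinning (fun _ ↦ isOpen_univ)
      (fun z _ ↦ by simp) hA w
    exact ⟨y, fun x hx ↦ eventually_le_of_finite_diff_fullBlocks (hAF x hx) hyA, hy, hyw,
      fun h ↦ absurd h hJ⟩

/-- Finitely many members of an almost decreasing sequence have infinitely many common
full blocks. -/
lemma infinite_biInter_fullBlocks {T : Type*} [LinearOrder T] {y : T → ℕ → Fin 2} {t : T}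
    (hinf : ∀ s < t, (fullBlocks (y s)).Infinite)
    (hle : ∀ s < t, ∀ r < s, ∀ᶠ i in atTop, y s i ≤ y r i)
    {G : Finset (ℕ → Fin 2)} (hG : ↑G ⊆ y '' Iio t) :
    (⋂ x ∈ G, fullBlocks x).Infinite := by
  classical
  obtain ⟨S, hS, rfl⟩ := Finset.subset_set_image_iff.1 hG
  obtain rfl | hne := S.eq_empty_or_nonempty
  · simpa using Set.infinite_univ
  have hm := S.max'_mem hne
  have hfin : (⋃ s ∈ S, fullBlocks (y (S.max' hne)) \ fullBlocks (y s)).Finite := by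
    refine S.finite_toSet.biUnion fun s hs ↦ finite_diff_fullBlocks ?_
    obtain h | h := (S.le_max' s hs).eq_or_lt
    · rw [← h]
      exact Eventually.of_forall fun i ↦ le_rfl
    · exact hle _ (hS hm) _ h
  refine ((hinf _ (hS hm)).sdiff hfin).mono ?_
  rintro n ⟨hn, hn'⟩
  simp only [mem_iUnion, not_exists] at hn'
  simp only [Finset.mem_image, iInter_exists, biInter_and', iInter_iInter_eq_right, mem_iInter]
  intro s hs
  by_contra h
  exact hn' s hs ⟨hn, h⟩

lemma IsGammaSet.image {α β : Type*} [TopologicalSpace α] [TopologicalSpace β] {X : Set α}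
    (hX : IsGammaSet X) {f : α → β} (hf : Continuous f) : IsGammaSet (f '' X) := by
  classical
  intro J hJ hcov
  obtain ⟨D, hD, hXD⟩ := hX {V | ∃ U ∈ J, f ⁻¹' U = V} (by
      rintro _ ⟨U, hU, rfl⟩
      exact (hJ U hU).preimage hf) (by
      intro F hF
      obtain ⟨U, hU, hFU⟩ := hcov (F.image f) (by simpa using image_mono hF)
      exact ⟨_, ⟨U, hU, rfl⟩, by simpa using hFU⟩)
  choose E hE hED using hD
  refine ⟨E, hE, ?_⟩
  rintro _ ⟨x, hx, rfl⟩
  have := hXD hx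
  simp only [← hED] at this
  simpa using this

open Cardinal in
/-- Every type is enumerated by a well-order all of whose initial segments are smaller. -/
lemma exists_wellOrder_mk_Iio_lt (α : Type*) :
    ∃ (T : Type _) (_ : LinearOrder T) (_ : WellFoundedLT T) (_ : T ≃ α),
      ∀ t : T, #(Iio t) < #α := by
  obtain ⟨_, _, h⟩ := exists_ord_eq_type_lt α
  exact ⟨α, _, inferInstance, Equiv.refl α, fun t ↦ mk_Iio_lt t h⟩

open Cardinal in
/-- Under `𝔭 = 2^{ℵ₀}` there is a γ-set in the Cantor space such that every point agrees with
some element of the γ-set on infinitely many dyadic blocks. -/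
lemma PseudoIntersectionNumberEqContinuum.exists_gammaSet_agreeing
    (hp : PseudoIntersectionNumberEqContinuum) :
    ∃ X : Set (ℕ → Fin 2), IsGammaSet X ∧
      ∀ w : ℕ → Fin 2, ∃ y ∈ X, ∃ᶠ n in atTop, ∀ i, Nat.log 2 i = n → y i = w i := by
  classical
  obtain ⟨b, hb⟩ := TopologicalSpace.exists_seq_basis (ℕ → Fin 2)
  let V : Finset ℕ → Set (ℕ → Fin 2) := fun d ↦ ⋃ n ∈ d, b n
  have hV : ∀ d, IsOpen (V d) := fun d ↦ isOpen_biUnion fun n _ ↦ hb.isOpen ⟨n, rfl⟩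
  obtain ⟨T, _, _, e, he⟩ := exists_wellOrder_mk_Iio_lt ((ℕ → Fin 2) × Set (Finset ℕ))
  have hT : #((ℕ → Fin 2) × Set (Finset ℕ)) ≤ 2 ^ ℵ₀ := by simp
  let Q : Set (ℕ → Fin 2) := {z | ∀ᶠ i in atTop, z i = 0}
  obtain ⟨y, hy⟩ := exists_forall_image_Iio (T := T) (X := ℕ → Fin 2)
    (fun t F x ↦ (∀ x' ∈ F, ∀ᶠ i in atTop, x i ≤ x' i) ∧ (fullBlocks x).Infinite ∧
      (∃ᶠ n in atTop, ∀ i, Nat.log 2 i = n → x i = (e t).1 i) ∧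
      ((∀ G : Finset (ℕ → Fin 2), ↑G ⊆ F ∪ Q → ∃ d ∈ (e t).2, ↑G ⊆ V d) →
        ∃ D : ℕ → Finset ℕ, (∀ n, D n ∈ (e t).2) ∧ (∀ x ∈ F, ∀ᶠ n in atTop, x ∈ V (D n)) ∧
          ∀ z : ℕ → Fin 2, (∀ᶠ i in atTop, z i ≤ x i) → ∀ᶠ n in atTop, z ∈ V (D n)))
    (fun y t ih ↦ hp.exists_almost_below hV (y '' Iio t)
      ((mk_image_le.trans_lt (he t)).trans_le hT)
      (fun G hG ↦ infinite_biInter_fullBlocks (fun s hs ↦ (ih s hs).2.1)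
        (fun s hs r hr ↦ (ih s hs).1 _ ⟨r, hr, rfl⟩) hG) (e t).1 (e t).2)
  refine ⟨Set.range y ∪ Q, ?_, fun w ↦ ⟨y (e.symm (w, ∅)), Or.inl ⟨_, rfl⟩, by
    simpa using (hy (e.symm (w, ∅))).2.2.1⟩⟩
  intro J hJ hcov
  let K : Set (Finset ℕ) := {d | ∃ U ∈ J, V d ⊆ U}
  have hK : ∀ G : Finset (ℕ → Fin 2), ↑G ⊆ Set.range y ∪ Q → ∃ d ∈ K, ↑G ⊆ V d := by
    intro G hG
    obtain ⟨U, hU, hGU⟩ := hcov G hG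
    have : ∀ x : G, ∃ n, x.1 ∈ b n ∧ b n ⊆ U := fun x ↦ by
      obtain ⟨_, ⟨n, rfl⟩, hx, hn⟩ := hb.exists_subset_of_mem_open (hGU x.2) (hJ U hU)
      exact ⟨n, hx, hn⟩
    choose n hn hnU using this
    refine ⟨Finset.univ.image n, ⟨U, hU, ?_⟩, fun x hx ↦ ?_⟩
    · refine iUnion₂_subset fun i hi ↦ ?_
      obtain ⟨x, -, rfl⟩ := Finset.mem_image.1 hi
      exact hnU x
    · simp only [V, mem_iUnion]
      exact ⟨n ⟨x, hx⟩, by simp, hn ⟨x, hx⟩⟩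
  let t : T := e.symm (0, K)
  have ht : (e t).2 = K := by simp [t]
  obtain ⟨D, hDK, hDF, hDz⟩ := (hy t).2.2.2 fun G hG ↦
    ht ▸ hK G (hG.trans (union_subset_union_left _ (image_subset_range _ _)))
  rw [ht] at hDK
  choose U hUJ hDU using hDK
  refine ⟨U, hUJ, fun x hx ↦ ?_⟩
  have hev : ∀ᶠ n in atTop, x ∈ V (D n) := by
    obtain ⟨s, rfl⟩ | hx := hx
    · obtain h | rfl | h := lt_trichotomy s t
      · exact hDF _ ⟨s, h, rfl⟩
      · exact hDz _ (Eventually.of_forall fun i ↦ le_rfl)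
      · exact hDz _ ((hy s).1 _ ⟨t, h, rfl⟩)
    · exact hDz _ (Eventually.mono hx fun i hi ↦ by simp [hi])
  obtain ⟨N, hN⟩ := eventually_atTop.1 hev
  simp only [mem_iUnion, mem_iInter]
  exact ⟨N, fun n hn ↦ hDU n (hN n (le_of_lt hn))⟩

/-- Reals within `2^{-2^{n+1}}` of a dyadic rational in `[-1, 1]` of denominator `2^{2^n}`. -/
noncomputable def nearDyadic (n : ℕ) : Set ℝ :=
  ⋃ m ∈ Finset.Icc (-2 ^ 2 ^ n : ℤ) (2 ^ 2 ^ n),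
    Metric.closedBall ((m : ℝ) / 2 ^ 2 ^ n) (((2 : ℝ) ^ 2 ^ n)⁻¹ ^ 2)

lemma volume_nearDyadic_le (n : ℕ) :
    volume (nearDyadic n) ≤ ENNReal.ofReal (6 * (1 / 2) ^ n) := by
  refine (measure_biUnion_finset_le _ _).trans ?_
  simp only [Real.volume_closedBall, Finset.sum_const, nsmul_eq_mul]
  rw [← ENNReal.ofReal_natCast, ← ENNReal.ofReal_mul (by positivity)]
  refine ENNReal.ofReal_le_ofReal ?_
  have hcard : ((Finset.Icc (-2 ^ 2 ^ n : ℤ) (2 ^ 2 ^ n)).card : ℝ) = 2 * 2 ^ 2 ^ n + 1 := by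
    have h0 : (0 : ℤ) ≤ 2 ^ 2 ^ n := by positivity
    have h : ((Finset.Icc (-2 ^ 2 ^ n : ℤ) (2 ^ 2 ^ n)).card : ℤ) = 2 * 2 ^ 2 ^ n + 1 := by
      rw [Int.card_Icc, Int.toNat_of_nonneg (by linarith [h0])]
      ring
    exact_mod_cast h
  have h1 : (1 : ℝ) ≤ 2 ^ 2 ^ n := one_le_pow₀ one_le_two
  have h2 : (2 : ℝ) ^ n ≤ 2 ^ 2 ^ n := pow_le_pow_right₀ one_le_two Nat.lt_two_pow_self.le
  rw [hcard]
  generalize (2 : ℝ) ^ 2 ^ n = c at *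
  calc (2 * c + 1) * (2 * c⁻¹ ^ 2) ≤ (3 * c) * (2 * c⁻¹ ^ 2) := by gcongr; linarith
    _ = 6 * c⁻¹ := by field_simp; norm_num
    _ ≤ 6 * (1 / 2) ^ n := by
      rw [one_div, inv_pow]
      gcongr

lemma volume_limsup_nearDyadic : volume (limsup nearDyadic atTop) = 0 := by
  refine measure_limsup_atTop_eq_zero (ne_top_of_le_ne_top ?_
    (ENNReal.tsum_le_tsum volume_nearDyadic_le))
  exact ((summable_geometric_of_lt_one (by norm_num) (by norm_num)).mul_left 6).tsum_ofReal_ne_top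

lemma exists_sum_ofDigitsTerm_eq (x : ℕ → Fin 2) (a : ℕ) :
    ∃ N : ℕ, N < 2 ^ a ∧ ∑ i ∈ Finset.range a, Real.ofDigitsTerm x i = N / 2 ^ a := by
  induction a with
  | zero => exact ⟨0, by simp⟩
  | succ a ih =>
    obtain ⟨N, hN, h⟩ := ih
    refine ⟨2 * N + x a, by rw [pow_succ]; omega, ?_⟩
    rw [Finset.sum_range_succ, h, Real.ofDigitsTerm]
    push_cast
    field_simp
    ring

lemma ofDigits_sub_mem_nearDyadic {x y : ℕ → Fin 2} {n : ℕ}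
    (h : ∀ i, Nat.log 2 i = n → x i = y i) :
    Real.ofDigits y - Real.ofDigits x ∈ nearDyadic n := by
  obtain ⟨N, hN, hNy⟩ := exists_sum_ofDigitsTerm_eq y (2 ^ n)
  obtain ⟨M, hM, hMx⟩ := exists_sum_ofDigitsTerm_eq x (2 ^ n)
  have htail := Real.abs_ofDigits_sub_ofDigits_le (x := fun i ↦ y (i + 2 ^ n))
    (y := fun i ↦ x (i + 2 ^ n)) (n := 2 ^ n) fun i hi ↦
      (h _ ((Nat.log_eq_iff (by simp)).2 ⟨by omega, by rw [pow_succ]; omega⟩)).symm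
  rw [Real.ofDigits_eq_sum_add_ofDigits y (2 ^ n), Real.ofDigits_eq_sum_add_ofDigits x (2 ^ n),
    hNy, hMx]
  simp only [nearDyadic, mem_iUnion]
  refine ⟨N - M, ?_, ?_⟩
  · zify at hN hM
    rw [Finset.mem_Icc]
    constructor <;> linarith [Int.natCast_nonneg N, Int.natCast_nonneg M]
  · rw [Metric.mem_closedBall, Real.dist_eq]
    push_cast at htail ⊢
    rw [show ∀ p q r s t : ℝ, p / t + r - (q / t + s) - (p - q) / t = r - s by intros; ring,
      ← mul_sub, abs_mul, abs_of_nonneg (by positivity), pow_two]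
    gcongr

/-- Assume `𝔭 = 2^{ℵ₀}`. Then there is a γ-set `Y ⊆ ℝ` which is not strongly meager:
there is a Lebesgue-null set `G' ⊆ ℝ` with `Y + G' = ℝ`. -/
theorem real_gammaSet_not_stronglyMeager_of_p_eq_continuum
    (hp : PseudoIntersectionNumberEqContinuum) :
    ∃ Y : Set ℝ, IsGammaSet Y ∧
      ∃ G' : Set ℝ, volume G' = 0 ∧ Y + G' = Set.univ := by
  obtain ⟨X, hX, hagree⟩ := hp.exists_gammaSet_agreeing
  refine ⟨Real.ofDigits '' X, hX.image Real.continuous_ofDigits,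
    ⋃ m : ℤ, (fun r : ℝ ↦ r + -(m : ℝ)) ⁻¹' limsup nearDyadic atTop, ?_, ?_⟩
  · refine measure_iUnion_null fun m ↦ ?_
    rw [measure_preimage_add_right]
    exact volume_limsup_nearDyadic
  · refine eq_univ_of_forall fun z ↦ ?_
    obtain ⟨w, -, hw⟩ := Real.ofDigits_SurjOn one_lt_two
      ⟨Int.fract_nonneg z, (Int.fract_lt_one z).le⟩
    obtain ⟨y, hyX, hy⟩ := hagree w
    refine ⟨_, ⟨y, hyX, rfl⟩, z - Real.ofDigits y, ?_, by ring⟩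
    refine mem_iUnion.2 ⟨⌊z⌋, ?_⟩
    have hz : z - Real.ofDigits y + -(⌊z⌋ : ℝ) = Real.ofDigits w - Real.ofDigits y := by
      rw [hw, Int.fract]
      ring
    rw [mem_preimage, hz, mem_limsup_iff_frequently_mem]
    exact hy.mono fun n hn ↦ ofDigits_sub_mem_nearDyadic hn
end
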